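/- arXiv:2304.00621 — 2 statements merged into one kernel-verified Lean document; each statement's English description precedes it below -/
import Mathlib

section
/- Let n≥1, β∈(0,∞)^n and α≥0. For every f∈VMO^{β,α}(ℝ^n) and every ε>0 there exists g∈C_c^∞(ℝ^n) such that ‖f−g‖_{BMO^{β,α}}≤ε; that is, VMO^{β,α}(ℝ^n) is contained in the closure of C_c^∞(ℝ^n) with respect to the seminorm ‖·‖_{BMO^{β,α}}. -/
open MeasureTheory

noncomputable section

/-- A `β`-cube in `ℝⁿ`: an axis-parallel rectangle centred at `c` whose `i`-th side
has length `l ^ β i`, where `l > 0` is the sidelength parameter `ℓ(Q)`. -/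
structure BetaCube (n : ℕ) (β : Fin n → ℝ) where
  c : EuclideanSpace ℝ (Fin n)
  l : ℝ
  l_pos : 0 < l

namespace BetaCube

variable {n : ℕ} {β : Fin n → ℝ}

/-- The underlying set of a `β`-cube. -/
def set (Q : BetaCube n β) : Set (EuclideanSpace ℝ (Fin n)) :=
  {x | ∀ i, |x i - Q.c i| ≤ Q.l ^ (β i) / 2}

/-- Translation `Q + v` of a `β`-cube. -/
def translate (Q : BetaCube n β) (v : EuclideanSpace ℝ (Fin n)) : BetaCube n β :=
  ⟨Q.c + v, Q.l, Q.l_pos⟩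

end BetaCube

/-- The average `⟨b⟩_Q` of `b` over a `β`-cube `Q`. -/
def cubeAvg {n : ℕ} {β : Fin n → ℝ} (Q : BetaCube n β)
    (b : EuclideanSpace ℝ (Fin n) → ℂ) : ℂ :=
  ⨍ x in Q.set, b x

/-- The fractional mean oscillation
`O^{β,α}(b;Q) = |Q|^{-α/|β|} · (1/|Q|) ∫_Q |b - ⟨b⟩_Q|`, where `|Q| = ℓ(Q)^{|β|}`. -/
def osc {n : ℕ} (β : Fin n → ℝ) (α : ℝ) (b : EuclideanSpace ℝ (Fin n) → ℂ)
    (Q : BetaCube n β) : ℝ :=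
  (Q.l ^ (∑ i, β i)) ^ (-(α / (∑ i, β i))) * ⨍ x in Q.set, ‖b x - cubeAvg Q b‖

/-- `b ∈ VMO^{β,α}(ℝⁿ)`: `b` is locally integrable, has finite `BMO^{β,α}` seminorm,
and satisfies the three vanishing conditions (small scales, large scales, far away). -/
def MemVMO {n : ℕ} (β : Fin n → ℝ) (α : ℝ) (b : EuclideanSpace ℝ (Fin n) → ℂ) : Prop :=
  LocallyIntegrable b volume ∧
  (∃ M : ℝ, ∀ Q : BetaCube n β, osc β α b Q ≤ M) ∧
  (∀ ε > (0:ℝ), ∃ r > (0:ℝ), ∀ Q : BetaCube n β, Q.l ≤ r → osc β α b Q ≤ ε) ∧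
  (∀ ε > (0:ℝ), ∃ r > (0:ℝ), ∀ Q : BetaCube n β, r ≤ Q.l → osc β α b Q ≤ ε) ∧
  (∀ Q : BetaCube n β, ∀ ε > (0:ℝ), ∃ R : ℝ, ∀ x : EuclideanSpace ℝ (Fin n),
    R ≤ ‖x‖ → osc β α b (Q.translate x) ≤ ε)

/-!
Write `|β| = ∑ i, β i`. In two extreme ranges of `α` the space `VMO^{β,α}` is trivial. If
`α ≤ -|β|`, the oscillation over a cube is at most twice that over any larger cube, so vanishing at
large scales makes `f` constant. If `β i ≤ α` for some `i`, then, for a mollification of `f`,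
moving a cube of size `s` by `s ^ β i` in direction `i` changes the average by `o(s ^ α)`, so moving
it by a fixed distance changes the average by `o(1)`: the mollification is invariant in direction
`i`, and vanishing at infinity makes it constant.

In the remaining range, fix `γ` with `max 0 α < γ ≤ min β`. Averages of `f` over intersecting cubes
`Q`, `P` with `ℓ(Q) ≤ ℓ(P)` differ by at most `C ℓ(Q) ^ α (ℓ(P) / ℓ(Q)) ^ γ`, whereas a cutoff
adapted to `P` varies by `(ℓ(Q) / ℓ(P)) ^ γ` on `Q`. Hence cutting `f - ⟨f⟩_P` off to a large cube
`P` and mollifying gives `g` for which the error `f - g` is bounded by a constant independent of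
`P`, and small on the cubes in any prescribed compact family. The error of such a `g` is large only
on another compact family, so the approximants `g₁, …, g_N` can be chosen one after another with
errors which are large on pairwise disjoint families. The error of their mean is then at most
`C / N + ε`, which is how a merely bounded error becomes small.
-/

section MeanOsc

variable {X E : Type*} [MeasurableSpace X] {μ : Measure X} [NormedAddCommGroup E]

lemma integrable_norm_sub_const [IsFiniteMeasure μ] {f : X → E} (hf : Integrable f μ) (a : E) :
    Integrable (fun x => ‖f x - a‖) μ :=
  (hf.sub (integrable_const a)).norm

variable [NormedSpace ℝ E]

/-- The mean oscillation `∫ ‖f - ∫ f dμ‖ dμ` of `f`; the measure `μ` is meant to be a probability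
measure, such as normalised Lebesgue measure on a cube. -/
def meanOsc (f : X → E) (μ : Measure X) : ℝ :=
  ∫ x, ‖f x - ∫ y, f y ∂μ‖ ∂μ

lemma meanOsc_nonneg (f : X → E) (μ : Measure X) : 0 ≤ meanOsc f μ :=
  integral_nonneg fun _ => norm_nonneg _

lemma meanOsc_const_smul (k : ℝ) (f : X → E) (μ : Measure X) :
    meanOsc (k • f) μ = |k| * meanOsc f μ := by
  simp only [meanOsc, Pi.smul_apply, integral_smul, ← smul_sub, norm_smul, Real.norm_eq_abs,
    integral_const_mul]

lemma meanOsc_congr_ae {f g : X → E} (h : f =ᵐ[μ] g) : meanOsc f μ = meanOsc g μ := by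
  rw [meanOsc, meanOsc, integral_congr_ae h]
  exact integral_congr_ae (h.mono fun x hx => by simp only [hx])

lemma meanOsc_add_le [IsFiniteMeasure μ] {f g : X → E} (hf : Integrable f μ)
    (hg : Integrable g μ) : meanOsc (f + g) μ ≤ meanOsc f μ + meanOsc g μ := by
  have hf' := integrable_norm_sub_const hf (∫ y, f y ∂μ)
  have hg' := integrable_norm_sub_const hg (∫ y, g y ∂μ)
  simp only [meanOsc, Pi.add_apply, integral_add hf hg]
  rw [← integral_add hf' hg']
  refine integral_mono_of_nonneg (.of_forall fun _ => norm_nonneg _) (hf'.add hg')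
    (.of_forall fun x => ?_)
  simp only [add_sub_add_comm]
  exact norm_add_le _ _

section Probability

variable [IsProbabilityMeasure μ]

lemma norm_integral_sub_le [CompleteSpace E] {f : X → E} (hf : Integrable f μ) (a : E) :
    ‖∫ x, f x ∂μ - a‖ ≤ ∫ x, ‖f x - a‖ ∂μ := by
  have h : ∫ x, f x ∂μ - a = ∫ x, (f x - a) ∂μ := by
    rw [integral_sub hf (integrable_const a), integral_const, probReal_univ, one_smul]
  exact h ▸ norm_integral_le_integral_norm _

lemma meanOsc_sub_const [CompleteSpace E] {f : X → E} (hf : Integrable f μ) (a : E) :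
    meanOsc (fun x => f x - a) μ = meanOsc f μ := by
  simp only [meanOsc, integral_sub hf (integrable_const a), integral_const, probReal_univ,
    one_smul, sub_sub_sub_cancel_right]

lemma meanOsc_le_two_mul_integral_norm_sub [CompleteSpace E] {f : X → E} (hf : Integrable f μ)
    (a : E) : meanOsc f μ ≤ 2 * ∫ x, ‖f x - a‖ ∂μ := by
  have hfa := integrable_norm_sub_const hf a
  calc meanOsc f μ ≤ ∫ x, (‖f x - a‖ + ‖∫ y, f y ∂μ - a‖) ∂μ := by
        refine integral_mono_of_nonneg (.of_forall fun _ => norm_nonneg _)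
          (hfa.add (integrable_const _)) (.of_forall fun x => ?_)
        simpa only [sub_sub_sub_cancel_right] using norm_sub_le (f x - a) (∫ y, f y ∂μ - a)
    _ = ∫ x, ‖f x - a‖ ∂μ + ‖∫ y, f y ∂μ - a‖ := by
        rw [integral_add hfa (integrable_const _), integral_const, probReal_univ, one_smul]
    _ ≤ 2 * ∫ x, ‖f x - a‖ ∂μ := by
        linarith [norm_integral_sub_le hf a]

lemma meanOsc_le_two_mul_of_norm_sub_le [CompleteSpace E] {f : X → E} (hf : Integrable f μ)
    {a : E} {D : ℝ} (h : ∀ᵐ x ∂μ, ‖f x - a‖ ≤ D) : meanOsc f μ ≤ 2 * D := by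
  refine (meanOsc_le_two_mul_integral_norm_sub hf a).trans ?_
  have hD := integral_mono_ae (integrable_norm_sub_const hf a) (integrable_const D) h
  rw [integral_const, probReal_univ, one_smul] at hD
  exact mul_le_mul_of_nonneg_left hD zero_le_two

-- Compare `ψ • f` with the constant `k • ∫ f`.
lemma meanOsc_smul_le [CompleteSpace E] {f : X → E} (hf : Integrable f μ) {ψ : X → ℝ}
    (hψm : AEStronglyMeasurable ψ μ) (hψ : ∀ᵐ x ∂μ, |ψ x| ≤ 1) {k D : ℝ}
    (hk : ∀ᵐ x ∂μ, |ψ x - k| ≤ D) :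
    meanOsc (ψ • f) μ ≤ 2 * (meanOsc f μ + D * ‖∫ x, f x ∂μ‖) := by
  set m := ∫ x, f x ∂μ
  have hfm := integrable_norm_sub_const hf m
  refine (meanOsc_le_two_mul_integral_norm_sub (hf.bdd_smul 1 hψm hψ) (k • m)).trans ?_
  refine mul_le_mul_of_nonneg_left ?_ zero_le_two
  calc ∫ x, ‖(ψ • f) x - k • m‖ ∂μ ≤ ∫ x, (‖f x - m‖ + D * ‖m‖) ∂μ := by
        refine integral_mono_of_nonneg (.of_forall fun _ => norm_nonneg _)
          (hfm.add (integrable_const _)) ?_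
        filter_upwards [hψ, hk] with x hψx hkx
        have h : (ψ • f) x - k • m = ψ x • (f x - m) + (ψ x - k) • m := by
          simp only [Pi.smul_apply', smul_sub, sub_smul]; abel
        rw [h]
        refine (norm_add_le _ _).trans ?_
        rw [norm_smul, norm_smul, Real.norm_eq_abs, Real.norm_eq_abs]
        exact add_le_add (mul_le_of_le_one_left (norm_nonneg _) hψx)
          (mul_le_mul_of_nonneg_right hkx (norm_nonneg _))
    _ = meanOsc f μ + D * ‖m‖ := by
        rw [integral_add hfm (integrable_const _), integral_const, probReal_univ, one_smul, meanOsc]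

end Probability

lemma meanOsc_integral_le [IsFiniteMeasure μ] {V : Type*} [MeasurableSpace V] {ν : Measure V}
    [SFinite ν] {w : X → V → E} (hw : Integrable (Function.uncurry w) (μ.prod ν)) :
    meanOsc (fun x => ∫ v, w x v ∂ν) μ ≤ ∫ v, meanOsc (fun x => w x v) μ ∂ν := by
  have hmean : Integrable (fun v => ∫ x, w x v ∂μ) ν := hw.integral_prod_right
  have hdev : Integrable (fun p : X × V => w p.1 p.2 - ∫ y, w y p.2 ∂μ) (μ.prod ν) :=
    hw.sub (hmean.comp_snd μ)
  calc meanOsc (fun x => ∫ v, w x v ∂ν) μ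
      ≤ ∫ x, ∫ v, ‖w x v - ∫ y, w y v ∂μ‖ ∂ν ∂μ := by
        refine integral_mono_of_nonneg (.of_forall fun _ => norm_nonneg _)
          hdev.norm.integral_prod_left ?_
        filter_upwards [hw.prod_right_ae] with x (hx : Integrable (w x) ν)
        rw [integral_integral_swap hw, ← integral_sub hx hmean]
        exact norm_integral_le_integral_norm _
    _ = ∫ v, meanOsc (fun x => w x v) μ ∂ν := integral_integral_swap hdev.norm

lemma meanOsc_integral_smul_le [IsFiniteMeasure μ] {V : Type*} [MeasurableSpace V]
    {ν : Measure V} [SFinite ν] {ρ : V → ℝ} (hρ : ∀ v, 0 ≤ ρ v) (hρ_one : ∫ v, ρ v ∂ν = 1)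
    {w : X → V → E} (hw : Integrable (fun p : X × V => ρ p.2 • w p.1 p.2) (μ.prod ν)) {B : ℝ}
    (hB : ∀ v, ρ v ≠ 0 → meanOsc (fun x => w x v) μ ≤ B) :
    meanOsc (fun x => ∫ v, ρ v • w x v ∂ν) μ ≤ B := by
  calc meanOsc (fun x => ∫ v, ρ v • w x v ∂ν) μ
      ≤ ∫ v, meanOsc (ρ v • fun x => w x v) μ ∂ν := meanOsc_integral_le hw
    _ ≤ ∫ v, ρ v * B ∂ν := by
        refine integral_mono_of_nonneg (.of_forall fun _ => meanOsc_nonneg _ _)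
          ((integrable_of_integral_eq_one hρ_one).mul_const B) (.of_forall fun v => ?_)
        simp only [meanOsc_const_smul, abs_of_nonneg (hρ v)]
        obtain hv | hv := eq_or_ne (ρ v) 0
        · simp only [hv, zero_mul, le_refl]
        · exact mul_le_mul_of_nonneg_left (hB v hv) (hρ v)
    _ = B := by rw [integral_mul_const, hρ_one, one_mul]

end MeanOsc

lemma meanOsc_map_equiv {X Y E : Type*} [MeasurableSpace X] [MeasurableSpace Y]
    [NormedAddCommGroup E] [NormedSpace ℝ E] (e : X ≃ᵐ Y) (f : Y → E) (μ : Measure X) :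
    meanOsc f (μ.map e) = meanOsc (f ∘ e) μ := by
  simp only [meanOsc, integral_map_equiv, Function.comp_apply]

lemma exists_forall_le_rpow {ι : Type*} [Finite ι] {β : ι → ℝ} (hβ : ∀ i, 0 < β i) (a : ι → ℝ) :
    ∃ κ : ℝ, 1 ≤ κ ∧ ∀ i, a i ≤ κ ^ β i :=
  ((Filter.eventually_ge_atTop 1).and (Filter.eventually_all.2 fun i =>
    (tendsto_rpow_atTop (hβ i)).eventually_ge_atTop (a i))).exists

lemma locallyIntegrable_norm_sub_const {X E : Type*} [MeasurableSpace X] [TopologicalSpace X]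
    [NormedAddCommGroup E] {μ : Measure X} [IsLocallyFiniteMeasure μ] {b : X → E}
    (hb : LocallyIntegrable b μ) (a : E) : LocallyIntegrable (fun x => ‖b x - a‖) μ := fun x =>
  (hb.sub (locallyIntegrable_const a) x).norm

namespace BetaCube

variable {n : ℕ} {β : Fin n → ℝ} {E : Type*} [NormedAddCommGroup E]

lemma set_eq_preimage (Q : BetaCube n β) :
    Q.set = WithLp.ofLp ⁻¹' Set.univ.pi fun i =>
      Set.Icc (Q.c i - Q.l ^ β i / 2) (Q.c i + Q.l ^ β i / 2) := by
  ext x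
  simp only [set, Set.mem_ofPred_eq, Set.mem_preimage, Set.mem_univ_pi, Set.mem_Icc, abs_le,
    neg_le_sub_iff_le_add, sub_le_iff_le_add, add_comm]

lemma isCompact_set (Q : BetaCube n β) : IsCompact Q.set := by
  rw [Q.set_eq_preimage]
  exact (PiLp.homeomorph 2 fun _ : Fin n => ℝ).isCompact_preimage.2
    (isCompact_univ_pi fun _ => isCompact_Icc)

lemma measurableSet_set (Q : BetaCube n β) : MeasurableSet Q.set :=
  Q.isCompact_set.isClosed.measurableSet

lemma volume_set (Q : BetaCube n β) : volume Q.set = ENNReal.ofReal (Q.l ^ ∑ i, β i) := by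
  rw [Q.set_eq_preimage, (PiLp.volume_preserving_ofLp (Fin n)).measure_preimage
    (MeasurableSet.univ_pi fun i => measurableSet_Icc).nullMeasurableSet, volume_pi_pi]
  simp only [Real.volume_Icc, add_sub_sub_cancel, add_halves]
  rw [← ENNReal.ofReal_prod_of_nonneg fun i _ => Real.rpow_nonneg Q.l_pos.le _,
    Real.rpow_sum_of_pos Q.l_pos]

lemma volume_set_ne_zero (Q : BetaCube n β) : volume Q.set ≠ 0 := by
  simpa only [Q.volume_set, ne_eq, ENNReal.ofReal_eq_zero, not_le]
    using Real.rpow_pos_of_pos Q.l_pos _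

lemma set_subset_set_of_le (hβ : ∀ i, 0 ≤ β i) {Q P : BetaCube n β} (hc : Q.c = P.c)
    (hl : Q.l ≤ P.l) : Q.set ⊆ P.set := fun x hx i =>
  hc ▸ (hx i).trans (by have := Q.l_pos.le; gcongr; exact hβ i)

lemma set_subset_set_of_inter_nonempty (hβ : ∀ i, 0 ≤ β i) {Q P T : BetaCube n β}
    (h : (Q.set ∩ P.set).Nonempty) (hQP : Q.l ≤ P.l) (hc : T.c = Q.c)
    (hT : ∀ i, 3 * P.l ^ β i ≤ T.l ^ β i) : P.set ⊆ T.set := by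
  obtain ⟨y, hyQ, hyP⟩ := h
  intro x hx i
  have hl : Q.l ^ β i ≤ P.l ^ β i := Real.rpow_le_rpow Q.l_pos.le hQP (hβ i)
  have hx := abs_le.1 (hx i)
  have hyQ := abs_le.1 (hyQ i)
  have hyP := abs_le.1 (hyP i)
  have hT := hT i
  rw [hc, abs_le]
  constructor <;> linarith

/-- Lebesgue measure on a `β`-cube, normalised to a probability measure. -/
def measure (Q : BetaCube n β) : Measure (EuclideanSpace ℝ (Fin n)) :=
  ProbabilityTheory.cond volume Q.set

instance (Q : BetaCube n β) : IsProbabilityMeasure Q.measure :=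
  ProbabilityTheory.cond_isProbabilityMeasure_of_finite
    Q.volume_set_ne_zero Q.isCompact_set.measure_ne_top

lemma ae_measure_of_forall_mem {Q : BetaCube n β} {p : EuclideanSpace ℝ (Fin n) → Prop}
    (h : ∀ x ∈ Q.set, p x) : ∀ᵐ x ∂Q.measure, p x :=
  (ProbabilityTheory.ae_cond_mem Q.measurableSet_set).mono h

lemma integrable_measure (Q : BetaCube n β) {b : EuclideanSpace ℝ (Fin n) → E}
    (hb : LocallyIntegrable b) : Integrable b Q.measure :=
  (hb.integrableOn_isCompact Q.isCompact_set).smul_measure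
    (ENNReal.inv_ne_top.2 Q.volume_set_ne_zero)

lemma integral_measure [NormedSpace ℝ E] (Q : BetaCube n β) (b : EuclideanSpace ℝ (Fin n) → E) :
    ∫ x, b x ∂Q.measure = (Q.l ^ ∑ i, β i)⁻¹ • ∫ x in Q.set, b x := by
  rw [measure, ProbabilityTheory.cond, integral_smul_measure, Q.volume_set, ENNReal.toReal_inv,
    ENNReal.toReal_ofReal (Real.rpow_nonneg Q.l_pos.le _)]

lemma integral_measure_le_of_eq_zero {Q P : BetaCube n β} {u : EuclideanSpace ℝ (Fin n) → ℝ}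
    (hu : LocallyIntegrable u) (hu0 : ∀ x, 0 ≤ u x) (h : ∀ x ∈ Q.set \ P.set, u x = 0) :
    ∫ x, u x ∂Q.measure ≤ (P.l / Q.l) ^ (∑ i, β i) * ∫ x, u x ∂P.measure := by
  have hQP : ∫ x in Q.set, u x ≤ ∫ x in P.set, u x := by
    rw [setIntegral_eq_of_subset_of_forall_sdiff_eq_zero Q.measurableSet_set
      (Set.inter_subset_left (t := P.set)) (by simpa only [Set.sdiff_self_inter] using h)]
    exact setIntegral_mono_set (hu.integrableOn_isCompact P.isCompact_set) (.of_forall hu0)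
      Set.inter_subset_right.eventuallyLE
  have hQ := Real.rpow_pos_of_pos Q.l_pos (∑ i, β i)
  have hP := Real.rpow_pos_of_pos P.l_pos (∑ i, β i)
  rw [integral_measure, integral_measure, Real.div_rpow P.l_pos.le Q.l_pos.le, smul_eq_mul,
    smul_eq_mul, div_eq_inv_mul, mul_assoc, mul_inv_cancel_left₀ hP.ne']
  gcongr

lemma integral_measure_le_of_subset {Q P : BetaCube n β} {u : EuclideanSpace ℝ (Fin n) → ℝ}
    (hu : LocallyIntegrable u) (hu0 : ∀ x, 0 ≤ u x) (h : Q.set ⊆ P.set) :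
    ∫ x, u x ∂Q.measure ≤ (P.l / Q.l) ^ (∑ i, β i) * ∫ x, u x ∂P.measure :=
  integral_measure_le_of_eq_zero hu hu0 fun _ hx => (hx.2 (h hx.1)).elim

lemma add_mem_set_translate {Q : BetaCube n β} {x v : EuclideanSpace ℝ (Fin n)} :
    x + v ∈ (Q.translate v).set ↔ x ∈ Q.set := by
  simp only [set, translate, Set.mem_ofPred_eq, PiLp.add_apply, add_sub_add_right_eq_sub]

lemma measure_translate (Q : BetaCube n β) (v : EuclideanSpace ℝ (Fin n)) :
    (Q.translate v).measure = Q.measure.map (MeasurableEquiv.addRight v) := by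
  have hset : MeasurableEquiv.addRight v ⁻¹' (Q.translate v).set = Q.set :=
    Set.ext fun _ => add_mem_set_translate
  have hmap : MeasurePreserving (MeasurableEquiv.addRight v)
    (volume : Measure (EuclideanSpace ℝ (Fin n))) := measurePreserving_add_right volume v
  have hrestrict := hmap.restrict_preimage (Q.translate v).measurableSet_set
  rw [measure, measure, ProbabilityTheory.cond, ProbabilityTheory.cond, Measure.map_smul,
    volume_set, volume_set, ← hrestrict.map_eq, hset]
  rfl

end BetaCube

section Osc

variable {n : ℕ} {β : Fin n → ℝ} {α : ℝ} {a b : EuclideanSpace ℝ (Fin n) → ℂ}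

lemma cubeAvg_eq (Q : BetaCube n β) (b : EuclideanSpace ℝ (Fin n) → ℂ) :
    cubeAvg Q b = ∫ x, b x ∂Q.measure :=
  setAverage_eq' _ _ _

lemma norm_cubeAvg_sub_cubeAvg_le (hb : LocallyIntegrable b) {Q P : BetaCube n β}
    (h : Q.set ⊆ P.set) :
    ‖cubeAvg Q b - cubeAvg P b‖ ≤ (P.l / Q.l) ^ (∑ i, β i) * meanOsc b P.measure := by
  rw [cubeAvg_eq, cubeAvg_eq]
  exact (norm_integral_sub_le (Q.integrable_measure hb) _).trans
    (BetaCube.integral_measure_le_of_subset (locallyIntegrable_norm_sub_const hb _)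
      (fun _ => norm_nonneg _) h)

lemma osc_nonneg (β : Fin n → ℝ) (α : ℝ) (b : EuclideanSpace ℝ (Fin n) → ℂ) (Q : BetaCube n β) :
    0 ≤ osc β α b Q :=
  mul_nonneg (Real.rpow_nonneg (Real.rpow_nonneg Q.l_pos.le _) _)
    (integral_nonneg fun _ => norm_nonneg _)

variable [NeZero (∑ i, β i)]

lemma osc_eq (Q : BetaCube n β) (α : ℝ) (b : EuclideanSpace ℝ (Fin n) → ℂ) :
    osc β α b Q = Q.l ^ (-α) * meanOsc b Q.measure := by
  simp only [osc, meanOsc, cubeAvg_eq]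
  rw [← Real.rpow_mul Q.l_pos.le, mul_neg, mul_div_cancel₀ α (NeZero.ne (∑ i, β i)),
    setAverage_eq']
  rfl

lemma meanOsc_eq_rpow_mul_osc (Q : BetaCube n β) (α : ℝ) (b : EuclideanSpace ℝ (Fin n) → ℂ) :
    meanOsc b Q.measure = Q.l ^ α * osc β α b Q := by
  rw [osc_eq, ← mul_assoc, ← Real.rpow_add Q.l_pos, add_neg_cancel, Real.rpow_zero, one_mul]

lemma osc_add_le (ha : LocallyIntegrable a) (hb : LocallyIntegrable b) (Q : BetaCube n β) :
    osc β α (a + b) Q ≤ osc β α a Q + osc β α b Q := by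
  simp only [osc_eq, ← mul_add]
  exact mul_le_mul_of_nonneg_left
    (meanOsc_add_le (Q.integrable_measure ha) (Q.integrable_measure hb))
    (Real.rpow_nonneg Q.l_pos.le _)

lemma osc_const_smul (k : ℝ) (Q : BetaCube n β) : osc β α (k • b) Q = |k| * osc β α b Q := by
  rw [osc_eq, osc_eq, meanOsc_const_smul, mul_left_comm]

lemma osc_neg (Q : BetaCube n β) : osc β α (-b) Q = osc β α b Q := by
  simpa only [neg_one_smul, abs_neg, abs_one, one_mul] using osc_const_smul (-1) Q

lemma osc_le_of_norm_sub_le (hb : LocallyIntegrable b) (Q : BetaCube n β) {a : ℂ} {D : ℝ}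
    (h : ∀ x ∈ Q.set, ‖b x - a‖ ≤ D) : osc β α b Q ≤ Q.l ^ (-α) * (2 * D) := by
  rw [osc_eq]
  exact mul_le_mul_of_nonneg_left (meanOsc_le_two_mul_of_norm_sub_le (Q.integrable_measure hb)
    (BetaCube.ae_measure_of_forall_mem h)) (Real.rpow_nonneg Q.l_pos.le _)

lemma osc_le_of_subset (hb : LocallyIntegrable b) {Q P : BetaCube n β} (h : Q.set ⊆ P.set) :
    osc β α b Q ≤ 2 * (P.l / Q.l) ^ (α + ∑ i, β i) * osc β α b P := by
  have hQ := Real.rpow_pos_of_pos Q.l_pos α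
  have hmean : meanOsc b Q.measure ≤ 2 * ((P.l / Q.l) ^ (∑ i, β i) * (P.l ^ α * osc β α b P)) := by
    rw [← meanOsc_eq_rpow_mul_osc, meanOsc]
    exact (meanOsc_le_two_mul_integral_norm_sub (Q.integrable_measure hb) _).trans <|
      mul_le_mul_of_nonneg_left (BetaCube.integral_measure_le_of_subset
        (locallyIntegrable_norm_sub_const hb _) (fun _ => norm_nonneg _) h) zero_le_two
  calc osc β α b Q
      ≤ Q.l ^ (-α) * (2 * ((P.l / Q.l) ^ (∑ i, β i) * (P.l ^ α * osc β α b P))) := by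
        rw [osc_eq]
        exact mul_le_mul_of_nonneg_left hmean (Real.rpow_nonneg Q.l_pos.le _)
    _ = 2 * (P.l / Q.l) ^ (α + ∑ i, β i) * osc β α b P := by
        rw [Real.rpow_add (div_pos P.l_pos Q.l_pos), Real.div_rpow P.l_pos.le Q.l_pos.le α,
          Real.rpow_neg Q.l_pos.le]
        field_simp

lemma osc_comp_add_right (b : EuclideanSpace ℝ (Fin n) → ℂ) (v : EuclideanSpace ℝ (Fin n))
    (Q : BetaCube n β) : osc β α (fun x => b (x + v)) Q = osc β α b (Q.translate v) := by
  rw [osc_eq, osc_eq, Q.measure_translate, meanOsc_map_equiv]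
  rfl

end Osc

section Translation

variable {G E : Type*} [TopologicalSpace G] [AddGroup G] [IsTopologicalAddGroup G]
  [MeasurableSpace G] [BorelSpace G] [NormedAddCommGroup E] {μ : Measure G}
  [μ.IsAddRightInvariant] [μ.InnerRegularCompactLTTop] [IsLocallyFiniteMeasure μ] {h : G → E}

lemma tendsto_integral_norm_comp_add_right_sub (hh : Integrable h μ) :
    Filter.Tendsto (fun v => ∫ x, ‖h (x + v) - h x‖ ∂μ) (nhds 0) (nhds 0) := by
  set τ : G → C(G, G) := fun v => ⟨(· + v), by fun_prop⟩
  have hτ (v : G) : MeasurePreserving (τ v) μ μ := measurePreserving_add_right μ v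
  set F : G → Lp E 1 μ := fun v => Lp.compMeasurePreserving (τ v) (hτ v) hh.toL1
  have hF (v : G) : F v =ᵐ[μ] fun x => h (x + v) :=
    (Lp.coeFn_compMeasurePreserving _ (hτ v)).trans
      ((hτ v).quasiMeasurePreserving.ae_eq_comp hh.coeFn_toL1)
  have hF_cont : Continuous F := continuous_const.compMeasurePreservingLp
    (ContinuousMap.continuous_of_continuous_uncurry _ (continuous_snd.add continuous_fst)) hτ
    ENNReal.one_ne_top
  have hnorm (v : G) : ‖F v - F 0‖ = ∫ x, ‖h (x + v) - h x‖ ∂μ := by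
    rw [L1.norm_eq_integral_norm]
    refine integral_congr_ae ?_
    filter_upwards [Lp.coeFn_sub (F v) (F 0), hF v, hF 0] with x hsub hv h0
    rw [hsub, Pi.sub_apply, hv, h0, add_zero]
  simpa only [hnorm] using tendsto_iff_norm_sub_tendsto_zero.1 (hF_cont.tendsto 0)

lemma tendsto_setIntegral_norm_comp_add_right_sub [LocallyCompactSpace G] [T2Space G]
    (hh : LocallyIntegrable h μ) {K : Set G} (hK : IsCompact K) :
    Filter.Tendsto (fun v => ∫ x in K, ‖h (x + v) - h x‖ ∂μ) (nhds 0) (nhds 0) := by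
  obtain ⟨K', hK', hKK'⟩ := exists_compact_superset hK
  have hh' : Integrable (K'.indicator h) μ :=
    (hh.integrableOn_isCompact hK').integrable_indicator hK'.measurableSet
  have hmem : ∀ᶠ v in nhds (0 : G), ∀ x ∈ K, x + v ∈ interior K' :=
    hK.eventually_forall_of_forall_eventually fun x hx =>
      (continuous_snd.add continuous_fst).tendsto' (0, x) x (add_zero x)
        (isOpen_interior.mem_nhds (hKK' hx))
  refine squeeze_zero' (.of_forall fun v => integral_nonneg fun _ => norm_nonneg _) ?_
    (tendsto_integral_norm_comp_add_right_sub hh')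
  filter_upwards [hmem] with v hv
  calc ∫ x in K, ‖h (x + v) - h x‖ ∂μ
      = ∫ x in K, ‖K'.indicator h (x + v) - K'.indicator h x‖ ∂μ := by
        refine setIntegral_congr_fun hK.measurableSet fun x hx => ?_
        simp only [Set.indicator_of_mem (interior_subset (hv x hx)),
          Set.indicator_of_mem (interior_subset (hKK' hx))]
    _ ≤ ∫ x, ‖K'.indicator h (x + v) - K'.indicator h x‖ ∂μ :=
        setIntegral_le_integral ((hh'.comp_add_right v).sub hh').norm
          (.of_forall fun _ => norm_nonneg _)

end Translation

section Mollify

lemma integrable_convolution_integrand_restrict {G E : Type*} [NormedAddCommGroup G]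
    [MeasurableSpace G] [BorelSpace G] [SecondCountableTopology G] [NormedAddCommGroup E]
    [NormedSpace ℝ E] {μ : Measure G} [SFinite μ] [μ.IsAddRightInvariant] {k : G → ℝ}
    (hk : Integrable k μ) (hk_supp : HasCompactSupport k) {h : G → E}
    (hh : LocallyIntegrable h μ) {K : Set G} (hK : IsCompact K) :
    Integrable (fun p : G × G => k p.2 • h (p.1 - p.2)) ((μ.restrict K).prod μ) := by
  set L : Set G := (fun p : G × G => p.1 - p.2) '' K ×ˢ tsupport k
  have hL : IsCompact L := (hK.prod hk_supp).image (by fun_prop)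
  have hint := (hk.convolution_integrand (ContinuousLinearMap.lsmul ℝ ℝ)
    ((hh.integrableOn_isCompact hL).integrable_indicator hL.measurableSet)).integrableOn
      (s := K ×ˢ Set.univ)
  suffices h : IntegrableOn (fun p : G × G => k p.2 • h (p.1 - p.2)) (K ×ˢ Set.univ) (μ.prod μ) by
    rwa [IntegrableOn, ← Measure.prod_restrict, Measure.restrict_univ] at h
  refine hint.congr_fun (fun p hp => ?_) (hK.measurableSet.prod MeasurableSet.univ)
  obtain hp0 | hp0 := eq_or_ne (k p.2) 0
  · simp only [hp0, map_zero, zero_apply, zero_smul]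
  · have hpL : p.1 - p.2 ∈ L := ⟨p, ⟨hp.1, subset_tsupport k hp0⟩, rfl⟩
    simp only [Set.indicator_of_mem hpL, ContinuousLinearMap.lsmul_apply]

variable {n : ℕ} {β : Fin n → ℝ} {α : ℝ} {b h : EuclideanSpace ℝ (Fin n) → ℂ}

/-- The mollification of `h` by the bump function `φ`, rescaled to have integral `1`. -/
def mollify (φ : ContDiffBump (0 : EuclideanSpace ℝ (Fin n)))
    (h : EuclideanSpace ℝ (Fin n) → ℂ) : EuclideanSpace ℝ (Fin n) → ℂ :=
  convolution (φ.normed volume) h (ContinuousLinearMap.lsmul ℝ ℝ) volume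

variable (φ : ContDiffBump (0 : EuclideanSpace ℝ (Fin n)))

lemma contDiff_mollify (hh : LocallyIntegrable h) : ContDiff ℝ (⊤ : ℕ∞) (mollify φ h) :=
  φ.hasCompactSupport_normed.contDiff_convolution_left _ φ.contDiff_normed hh

lemma hasCompactSupport_mollify (hh : HasCompactSupport h) : HasCompactSupport (mollify φ h) :=
  φ.hasCompactSupport_normed.convolution _ hh

lemma integrable_mollify_integrand (hh : LocallyIntegrable h) (Q : BetaCube n β) :
    Integrable (fun p : EuclideanSpace ℝ (Fin n) × EuclideanSpace ℝ (Fin n) =>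
      φ.normed volume p.2 • h (p.1 - p.2)) (Q.measure.prod volume) := by
  rw [BetaCube.measure, ProbabilityTheory.cond, Measure.prod_smul_left]
  exact (integrable_convolution_integrand_restrict φ.integrable_normed φ.hasCompactSupport_normed
    hh Q.isCompact_set).smul_measure (ENNReal.inv_ne_top.2 Q.volume_set_ne_zero)

lemma meanOsc_sub_mollify_le (hb : LocallyIntegrable b) (hh : LocallyIntegrable h)
    (Q : BetaCube n β) {B : ℝ}
    (H : ∀ v, ‖v‖ ≤ φ.rOut → meanOsc (fun x => b x - h (x - v)) Q.measure ≤ B) :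
    meanOsc (b - mollify φ h) Q.measure ≤ B := by
  have hbφ := (φ.integrable_normed (μ := volume).smul_prod (Q.integrable_measure hb)).swap
  have hhφ := integrable_mollify_integrand φ hh Q
  have hw : Integrable (fun p : EuclideanSpace ℝ (Fin n) × EuclideanSpace ℝ (Fin n) =>
      φ.normed volume p.2 • (b p.1 - h (p.1 - p.2))) (Q.measure.prod volume) := by
    simp only [smul_sub]
    exact hbφ.sub hhφ
  have heq : b - mollify φ h =ᵐ[Q.measure]
      fun x => ∫ v, φ.normed volume v • (b x - h (x - v)) := by
    filter_upwards [hhφ.prod_right_ae] with x hx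
    simp only [smul_sub]
    rw [integral_sub (φ.integrable_normed.smul_const _) hx, integral_smul_const,
      φ.integral_normed, one_smul]
    rfl
  rw [meanOsc_congr_ae heq]
  refine meanOsc_integral_smul_le φ.nonneg_normed φ.integral_normed hw fun v hv => H v ?_
  have hv' : v ∈ Function.support (φ.normed volume) := hv
  rw [φ.support_normed_eq, mem_ball_zero_iff] at hv'
  exact hv'.le

variable [NeZero (∑ i, β i)]

lemma osc_sub_mollify_le (hb : LocallyIntegrable b) (hh : LocallyIntegrable h)
    (Q : BetaCube n β) {B : ℝ}
    (H : ∀ v, ‖v‖ ≤ φ.rOut → osc β α (fun x => b x - h (x - v)) Q ≤ B) :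
    osc β α (b - mollify φ h) Q ≤ B := by
  have hQ := Real.rpow_pos_of_pos Q.l_pos α
  have hmean := meanOsc_sub_mollify_le φ hb hh Q (B := Q.l ^ α * B) fun v hv => by
    rw [meanOsc_eq_rpow_mul_osc Q α]
    exact mul_le_mul_of_nonneg_left (H v hv) hQ.le
  rw [meanOsc_eq_rpow_mul_osc Q α] at hmean
  exact le_of_mul_le_mul_left hmean hQ

lemma osc_mollify_le (hh : LocallyIntegrable h) (Q : BetaCube n β) {B : ℝ}
    (H : ∀ v, ‖v‖ ≤ φ.rOut → osc β α h (Q.translate v) ≤ B) :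
    osc β α (mollify φ h) Q ≤ B := by
  rw [← osc_neg, ← zero_sub]
  refine osc_sub_mollify_le φ locallyIntegrable_zero hh Q fun v hv => ?_
  have hneg : (fun x => 0 - h (x - v)) = -fun x => h (x + -v) := by
    ext x
    rw [zero_sub, Pi.neg_apply, sub_eq_add_neg]
  change osc β α (fun x => 0 - h (x - v)) Q ≤ B
  rw [hneg, osc_neg, osc_comp_add_right]
  exact H (-v) (by rwa [norm_neg])

lemma tendsto_osc_sub_comp_sub_right (hh : LocallyIntegrable h) (Q : BetaCube n β) :
    Filter.Tendsto (fun v => osc β α (fun x => h x - h (x - v)) Q) (nhds 0) (nhds 0) := by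
  have hL : Filter.Tendsto (fun v => Q.l ^ (-α) * (2 * ((Q.l ^ ∑ i, β i)⁻¹ *
      ∫ x in Q.set, ‖h (x + -v) - h x‖))) (nhds 0) (nhds 0) := by
    have hset := (tendsto_setIntegral_norm_comp_add_right_sub hh Q.isCompact_set).comp
      (continuous_neg.tendsto' 0 0 neg_zero)
    simpa only [mul_zero, Function.comp_apply] using ((hset.const_mul _).const_mul _).const_mul _
  refine squeeze_zero (fun v => osc_nonneg _ _ _ _) (fun v => ?_) hL
  have hshift : LocallyIntegrable fun x => h (x - v) := by
    refine (locallyIntegrable_map_homeomorph (Homeomorph.subRight v)).1 ?_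
    rwa [Homeomorph.coe_subRight, map_sub_right_eq_self]
  rw [osc_eq]
  refine mul_le_mul_of_nonneg_left ?_ (Real.rpow_nonneg Q.l_pos.le _)
  refine (meanOsc_le_two_mul_integral_norm_sub
    (Q.integrable_measure (hh.sub hshift)) 0).trans_eq ?_
  simp only [Q.integral_measure, smul_eq_mul, Pi.sub_apply, sub_zero, ← sub_eq_add_neg]
  simp only [norm_sub_rev (h _) (h (_ - v))]

lemma exists_forall_osc_sub_mollify_le (hh : LocallyIntegrable h) (Q : BetaCube n β) {ε : ℝ}
    (hε : 0 < ε) : ∃ δ > 0, ∀ φ : ContDiffBump (0 : EuclideanSpace ℝ (Fin n)), φ.rOut ≤ δ →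
      osc β α (h - mollify φ h) Q ≤ ε := by
  obtain ⟨δ, hδ, H⟩ := Metric.nhds_basis_closedBall.eventually_iff.1
    ((tendsto_osc_sub_comp_sub_right (α := α) hh Q).eventually_le_const hε)
  exact ⟨δ, hδ, fun φ hφ => osc_sub_mollify_le φ hh hh Q fun v hv =>
    H (mem_closedBall_zero_iff.2 (hv.trans hφ))⟩

end Mollify

lemma eventually_comap_atTop {ι : Type*} {u : ι → ℝ} {p : ι → Prop} :
    (∀ᶠ i in Filter.comap u Filter.atTop, p i) ↔ ∃ R, ∀ i, R ≤ u i → p i := by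
  rw [(Filter.atTop_basis.comap u).eventually_iff]
  simp only [true_and, Set.mem_preimage, Set.mem_Ici]

lemma tendsto_zero_of_forall_eventually_le {ι : Type*} {u : ι → ℝ} {l : Filter ι}
    (hu : ∀ i, 0 ≤ u i) (h : ∀ ε > 0, ∀ᶠ i in l, u i ≤ ε) : Filter.Tendsto u l (nhds 0) :=
  tendsto_order.2 ⟨fun _ ha => .of_forall fun i => ha.trans_le (hu i), fun ε hε =>
    (h (ε / 2) (half_pos hε)).mono fun _ hi => hi.trans_lt (half_lt_self hε)⟩

namespace BetaCube

variable {n : ℕ} {β : Fin n → ℝ}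

lemma eventually_comap_l_nhds_zero {p : BetaCube n β → Prop} :
    (∀ᶠ Q in Filter.comap l (nhds 0), p Q) ↔ ∃ r > 0, ∀ Q, Q.l ≤ r → p Q := by
  rw [(Metric.nhds_basis_closedBall.comap l).eventually_iff]
  simp only [Set.mem_preimage, mem_closedBall_zero_iff, Real.norm_eq_abs, abs_of_pos (l_pos _)]

/-- The filter of `β`-cubes leaving every family `{Q | r ≤ ℓ(Q) ≤ R, ‖c‖ ≤ ρ}` with `r > 0`: it is
the cocompact filter of the space `ℝⁿ × (0, ∞)` of parameters `(c, ℓ)`. -/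
def escape (β : Fin n → ℝ) : Filter (BetaCube n β) :=
  Filter.comap l (nhds 0) ⊔ Filter.comap l Filter.atTop ⊔
    Filter.comap (fun Q => ‖Q.c‖) Filter.atTop

lemma eventually_escape_iff {p : BetaCube n β → Prop} :
    (∀ᶠ Q in escape β, p Q) ↔ (∃ r > 0, ∀ Q, Q.l ≤ r → p Q) ∧ (∃ R, ∀ Q, R ≤ Q.l → p Q) ∧
      ∃ ρ, ∀ Q, ρ ≤ ‖Q.c‖ → p Q := by
  rw [escape, Filter.eventually_sup, Filter.eventually_sup, eventually_comap_l_nhds_zero,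
    eventually_comap_atTop, eventually_comap_atTop, and_assoc]

lemma exists_forall_le_and_subset_of_eventually_escape (hβ : ∀ i, 0 < β i)
    {p : BetaCube n β → Prop} (h : ∀ᶠ Q in escape β, p Q) :
    ∃ r > 0, ∃ P : BetaCube n β, ∀ Q, ¬p Q → r ≤ Q.l ∧ Q.set ⊆ P.set := by
  obtain ⟨⟨r, hr, h_small⟩, ⟨R, h_large⟩, ρ, h_far⟩ := eventually_escape_iff.1 h
  obtain ⟨L, hL, hβL⟩ := exists_forall_le_rpow hβ fun i => 2 * ρ + R ^ β i
  refine ⟨r, hr, ⟨0, L, zero_lt_one.trans_le hL⟩, fun Q hQ => ?_⟩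
  have hrQ := not_le.1 (mt (h_small Q) hQ)
  have hQR := not_le.1 (mt (h_large Q) hQ)
  have hQρ := not_le.1 (mt (h_far Q) hQ)
  refine ⟨hrQ.le, fun x hx i => ?_⟩
  have hc : |Q.c i| ≤ ‖Q.c‖ := PiLp.norm_apply_le Q.c i
  have hl : Q.l ^ β i ≤ R ^ β i := Real.rpow_le_rpow Q.l_pos.le hQR.le (hβ i).le
  calc |x i - 0| ≤ |x i - Q.c i| + |Q.c i| := by
        simpa only [sub_zero, sub_add_cancel] using abs_add_le (x i - Q.c i) (Q.c i)
    _ ≤ L ^ β i / 2 := by linarith [hx i, hβL i]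

lemma tendsto_escape {X : Type*} {u : BetaCube n β → X} {f : Filter X}
    (h_small : Filter.Tendsto u (Filter.comap l (nhds 0)) f)
    (h_large : Filter.Tendsto u (Filter.comap l Filter.atTop) f)
    (h_far : ∀ r > 0, ∀ R, Filter.Tendsto u
      (Filter.comap (fun Q => ‖Q.c‖) Filter.atTop ⊓ Filter.principal {Q | r ≤ Q.l ∧ Q.l ≤ R}) f) :
    Filter.Tendsto u (escape β) f := by
  refine (h_small.sup h_large).sup fun s hs => ?_
  obtain ⟨r, hr, hs_small⟩ := eventually_comap_l_nhds_zero.1 (h_small hs)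
  obtain ⟨R, hs_large⟩ := eventually_comap_atTop.1 (h_large hs)
  refine Filter.mem_map.2 ?_
  filter_upwards [Filter.eventually_inf_principal.1 ((h_far r hr R).eventually hs)] with Q hQ
  obtain hQr | hrQ := le_total Q.l r
  · exact hs_small Q hQr
  obtain hQR | hRQ := le_total Q.l R
  · exact hQ ⟨hrQ, hQR⟩
  · exact hs_large Q hRQ

lemma norm_sub_center_le {Q : BetaCube n β} {x : EuclideanSpace ℝ (Fin n)} (hx : x ∈ Q.set) :
    ‖x - Q.c‖ ≤ ∑ i, Q.l ^ β i := by
  have hx' (i) : |(x - Q.c) i| ≤ Q.l ^ β i :=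
    (hx i).trans (half_le_self (Real.rpow_nonneg Q.l_pos.le _))
  rw [EuclideanSpace.norm_eq]
  refine Real.sqrt_le_iff.2 ⟨Finset.sum_nonneg fun i _ => (abs_nonneg _).trans (hx' i), ?_⟩
  calc ∑ i, ‖(x - Q.c) i‖ ^ 2 ≤ ∑ i, (Q.l ^ β i) ^ 2 :=
        Finset.sum_le_sum fun i _ => pow_le_pow_left₀ (abs_nonneg _) (hx' i) 2
    _ ≤ (∑ i, Q.l ^ β i) ^ 2 :=
        Finset.sum_sq_le_sq_sum_of_nonneg fun i _ => Real.rpow_nonneg Q.l_pos.le _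

end BetaCube

section Escape

open BetaCube

variable {n : ℕ} {β : Fin n → ℝ} {α : ℝ} [NeZero (∑ i, β i)]
  {f g : EuclideanSpace ℝ (Fin n) → ℂ}

lemma tendsto_osc_escape_of_memVMO (hβ : ∀ i, 0 ≤ β i) (hα : 0 ≤ α + ∑ i, β i)
    (hf : MemVMO β α f) : Filter.Tendsto (osc β α f) (escape β) (nhds 0) := by
  obtain ⟨hf_loc, -, h_small, h_large, h_far⟩ := hf
  refine tendsto_escape ?_ ?_ fun r hr R => ?_ <;>
    refine tendsto_zero_of_forall_eventually_le (osc_nonneg β α f) fun ε hε => ?_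
  · exact eventually_comap_l_nhds_zero.2 (h_small ε hε)
  · obtain ⟨R, -, hR⟩ := h_large ε hε
    exact eventually_comap_atTop.2 ⟨R, hR⟩
  obtain hR | hR := le_or_gt R 0
  · exact Filter.eventually_inf_principal.2 (.of_forall fun Q hQ =>
      absurd (hQ.2.trans hR) Q.l_pos.not_ge)
  -- A cube of size in `[r, R]` lies in the cube of size `R` with the same centre.
  have hc : 0 < 2 * (R / r) ^ (α + ∑ i, β i) := by positivity
  obtain ⟨ρ, hρ⟩ := h_far ⟨0, R, hR⟩ (ε / (2 * (R / r) ^ (α + ∑ i, β i))) (div_pos hε hc)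
  refine Filter.eventually_inf_principal.2 (eventually_comap_atTop.2 ⟨ρ, fun Q hQρ hQ => ?_⟩)
  set P : BetaCube n β := BetaCube.translate ⟨0, R, hR⟩ Q.c
  have hQP : Q.set ⊆ P.set := set_subset_set_of_le hβ (zero_add Q.c).symm hQ.2
  calc osc β α f Q ≤ 2 * (R / Q.l) ^ (α + ∑ i, β i) * osc β α f P := osc_le_of_subset hf_loc hQP
    _ ≤ 2 * (R / r) ^ (α + ∑ i, β i) * osc β α f P := by
        have := osc_nonneg β α f P
        have := Q.l_pos
        gcongr
        exact hQ.1
    _ ≤ ε := (le_div_iff₀' hc).1 (hρ Q.c hQρ)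

lemma tendsto_osc_comap_l_nhds_zero_of_lipschitzWith (hα : ∀ i, α < β i) {K : NNReal}
    (hg : LipschitzWith K g) :
    Filter.Tendsto (osc β α g) (Filter.comap BetaCube.l (nhds 0)) (nhds 0) := by
  have hbound (Q : BetaCube n β) : osc β α g Q ≤ 2 * (K * ∑ i, Q.l ^ (β i - α)) := by
    have hdist (x) (hx : x ∈ Q.set) : ‖g x - g Q.c‖ ≤ K * ∑ i, Q.l ^ β i :=
      (hg.norm_sub_le x Q.c).trans (mul_le_mul_of_nonneg_left (norm_sub_center_le hx) K.2)
    refine (osc_le_of_norm_sub_le hg.continuous.locallyIntegrable Q hdist).trans_eq ?_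
    simp only [sub_eq_add_neg, Real.rpow_add Q.l_pos, ← Finset.sum_mul]
    ring
  have hlim : Filter.Tendsto (fun t : ℝ => 2 * (K * ∑ i, t ^ (β i - α))) (nhds 0) (nhds 0) := by
    have hpow (i) : Filter.Tendsto (fun t : ℝ => t ^ (β i - α)) (nhds 0) (nhds 0) := by
      have h := (Real.continuousAt_rpow_const 0 (β i - α) (.inr (sub_nonneg.2 (hα i).le))).tendsto
      rwa [Real.zero_rpow (sub_pos.2 (hα i)).ne'] at h
    simpa only [Finset.sum_const_zero, mul_zero] using
      ((tendsto_finsetSum Finset.univ fun i _ => hpow i).const_mul (K : ℝ)).const_mul 2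
  exact squeeze_zero (osc_nonneg β α g) hbound (hlim.comp Filter.tendsto_comap)

lemma tendsto_osc_comap_l_atTop_of_integrable (hα : 0 < α + ∑ i, β i) (hg_loc : LocallyIntegrable g)
    (hg : Integrable g) :
    Filter.Tendsto (osc β α g) (Filter.comap BetaCube.l Filter.atTop) (nhds 0) := by
  have hbound (Q : BetaCube n β) :
      osc β α g Q ≤ Q.l ^ (-(α + ∑ i, β i)) * (2 * ∫ x, ‖g x‖) := by
    have hmean : ∫ x, ‖g x - 0‖ ∂Q.measure ≤ (Q.l ^ ∑ i, β i)⁻¹ * ∫ x, ‖g x‖ := by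
      simp only [sub_zero, Q.integral_measure, smul_eq_mul]
      exact mul_le_mul_of_nonneg_left (setIntegral_le_integral hg.norm
        (.of_forall fun _ => norm_nonneg _)) (inv_nonneg.2 (Real.rpow_nonneg Q.l_pos.le _))
    have hosc := (meanOsc_le_two_mul_integral_norm_sub (Q.integrable_measure hg_loc) 0).trans
      (mul_le_mul_of_nonneg_left hmean zero_le_two)
    rw [osc_eq, neg_add, Real.rpow_add Q.l_pos, Real.rpow_neg Q.l_pos.le (∑ i, β i), mul_assoc,
      mul_left_comm _ (2 : ℝ)]
    exact mul_le_mul_of_nonneg_left hosc (Real.rpow_nonneg Q.l_pos.le _)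
  refine squeeze_zero (osc_nonneg β α g) hbound ?_
  simpa only [zero_mul, Function.comp_apply] using
    ((tendsto_rpow_neg_atTop hα).comp Filter.tendsto_comap).mul_const (2 * ∫ x, ‖g x‖)

lemma osc_eventuallyEq_zero_of_hasCompactSupport (hβ : ∀ i, 0 ≤ β i)
    (hg_loc : LocallyIntegrable g) (hg : HasCompactSupport g) (R : ℝ) :
    osc β α g
      =ᶠ[Filter.comap (fun Q => ‖Q.c‖) Filter.atTop ⊓ Filter.principal {Q | Q.l ≤ R}] 0 := by
  obtain ⟨ρ, hρ⟩ := hg.isCompact.isBounded.exists_norm_le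
  refine Filter.eventually_inf_principal.2 (eventually_comap_atTop.2
    ⟨ρ + ∑ i, R ^ β i + 1, fun Q hQc hQR => (osc_nonneg β α g Q).antisymm' ?_⟩)
  have hg0 (x) (hx : x ∈ Q.set) : ‖g x - 0‖ ≤ 0 := by
    rw [sub_zero, norm_le_zero_iff]
    by_contra hgx
    have hxρ := hρ x (subset_tsupport g hgx)
    have hxc := norm_sub_center_le hx
    have hR : ∑ i, Q.l ^ β i ≤ ∑ i, R ^ β i :=
      Finset.sum_le_sum fun i _ => Real.rpow_le_rpow Q.l_pos.le hQR (hβ i)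
    linarith [norm_le_norm_add_norm_sub x Q.c]
  simpa only [mul_zero] using osc_le_of_norm_sub_le (α := α) hg_loc Q hg0

lemma tendsto_osc_escape_of_contDiff (hβ : ∀ i, 0 ≤ β i) (hα_pos : 0 < α + ∑ i, β i)
    (hα : ∀ i, α < β i) (hg : ContDiff ℝ 1 g) (hg_supp : HasCompactSupport g) :
    Filter.Tendsto (osc β α g) (escape β) (nhds 0) := by
  obtain ⟨K, hK⟩ := hg.lipschitzWith_of_hasCompactSupport hg_supp one_ne_zero
  have hg_loc : LocallyIntegrable g := hg.continuous.locallyIntegrable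
  refine tendsto_escape (tendsto_osc_comap_l_nhds_zero_of_lipschitzWith hα hK)
    (tendsto_osc_comap_l_atTop_of_integrable hα_pos hg_loc
      (hg.continuous.integrable_of_hasCompactSupport hg_supp)) fun r _ R => ?_
  refine tendsto_const_nhds.congr' (Filter.EventuallyEq.symm ?_)
  exact (osc_eventuallyEq_zero_of_hasCompactSupport hβ hg_loc hg_supp R).filter_mono
    (inf_le_inf_left _ (Filter.principal_mono.2 fun Q hQ => hQ.2))

end Escape

lemma two_mul_rpow_mul_div_rpow {s t : ℝ} (hs : 0 ≤ s) (ht : 0 ≤ t) (α γ : ℝ) :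
    (2 * s) ^ α * (t / (2 * s)) ^ γ = 2 ^ (α - γ) * (s ^ α * (t / s) ^ γ) := by
  rw [Real.mul_rpow zero_le_two hs, div_mul_eq_div_div_swap,
    Real.div_rpow (div_nonneg ht hs) zero_le_two, Real.rpow_sub two_pos]
  ring

-- Doubling `s` shrinks `s ^ α * (t / s) ^ γ` by the factor `2 ^ (α - γ)`, so the increments over a
-- dyadic chain from `s` to `t` add up to a geometric series.
lemma norm_sub_le_of_forall_le_two_mul {E : Type*} [SeminormedAddCommGroup E]
    {a : Set.Ioi (0 : ℝ) → E} {K α γ : ℝ} (hγ : 0 ≤ γ) (hαγ : α < γ)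
    (h : ∀ s t : Set.Ioi (0 : ℝ), s ≤ t → (t : ℝ) ≤ 2 * s → ‖a s - a t‖ ≤ K * (s : ℝ) ^ α)
    {s t : Set.Ioi (0 : ℝ)} (hst : s ≤ t) :
    ‖a s - a t‖ ≤ K / (1 - 2 ^ (α - γ)) * ((s : ℝ) ^ α * ((t : ℝ) / s) ^ γ) := by
  set q : ℝ := 2 ^ (α - γ) with hq
  have hq_pos : 0 < q := by positivity
  have hq_lt : q < 1 := Real.rpow_lt_one_of_one_lt_of_neg one_lt_two (sub_neg.2 hαγ)
  have hK : 0 ≤ K := nonneg_of_mul_nonneg_left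
    ((norm_nonneg _).trans (h t t le_rfl (le_mul_of_one_le_left t.2.out.le one_le_two)))
    (Real.rpow_pos_of_pos t.2 α)
  set C := K / (1 - q)
  have hC : K + C * q = C := by
    have : C * (1 - q) = K := div_mul_cancel₀ _ (sub_pos.2 hq_lt).ne'
    linarith
  have hC0 : 0 ≤ C := div_nonneg hK (sub_pos.2 hq_lt).le
  set w : Set.Ioi (0 : ℝ) → ℝ := fun s => (s : ℝ) ^ α * ((t : ℝ) / s) ^ γ
  have hw_ge {s} (hst : s ≤ t) : (s : ℝ) ^ α ≤ w s :=
    le_mul_of_one_le_right (Real.rpow_nonneg s.2.out.le α)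
      (Real.one_le_rpow ((one_le_div s.2).2 hst) hγ)
  obtain ⟨j, hj⟩ := pow_unbounded_of_one_lt ((t : ℝ) / s) one_lt_two
  replace hj := ((div_lt_iff₀ s.2).1 hj).le
  induction j generalizing s with
  | zero =>
    rw [pow_zero, one_mul] at hj
    rw [le_antisymm hst hj, sub_self, norm_zero]
    exact mul_nonneg hC0 ((Real.rpow_nonneg t.2.out.le α).trans (hw_ge le_rfl))
  | succ j ih =>
    obtain hts | hts := le_total (t : ℝ) (2 * s)
    · exact (h s t hst hts).trans (mul_le_mul (by nlinarith) (hw_ge hst)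
        (Real.rpow_nonneg s.2.out.le α) hC0)
    set s₂ : Set.Ioi (0 : ℝ) := ⟨2 * s, Set.mem_Ioi.2 (mul_pos two_pos s.2)⟩
    calc ‖a s - a t‖ ≤ ‖a s - a s₂‖ + ‖a s₂ - a t‖ := norm_sub_le_norm_sub_add_norm_sub _ _ _
      _ ≤ K * (s : ℝ) ^ α + C * w s₂ :=
          add_le_add (h s s₂ (le_mul_of_one_le_left s.2.out.le one_le_two) le_rfl)
            (ih hts (hj.trans_eq (by simp only [s₂]; ring)))
      _ ≤ K * w s + C * (q * w s) := by
          simp only [w, s₂, two_mul_rpow_mul_div_rpow s.2.out.le t.2.out.le, hq]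
          gcongr
          exact hw_ge hst
      _ = C * w s := by linear_combination w s * hC

section Growth

variable {n : ℕ} {β : Fin n → ℝ} {α γ M : ℝ} [NeZero (∑ i, β i)]
  {b : EuclideanSpace ℝ (Fin n) → ℂ}

lemma norm_cubeAvg_sub_cubeAvg_le_of_osc_le (hb : LocallyIntegrable b) {Q P : BetaCube n β}
    (h : Q.set ⊆ P.set) (hM : osc β α b P ≤ M) :
    ‖cubeAvg Q b - cubeAvg P b‖ ≤ (P.l / Q.l) ^ (∑ i, β i) * (P.l ^ α * M) := by
  refine (norm_cubeAvg_sub_cubeAvg_le hb h).trans ?_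
  have := Q.l_pos
  have := P.l_pos
  rw [meanOsc_eq_rpow_mul_osc P α]
  gcongr

lemma norm_cubeAvg_sub_cubeAvg_le_of_center_eq (hβ : ∀ i, 0 ≤ β i) (hγ : 0 ≤ γ) (hαγ : α < γ)
    (hα : 0 ≤ α + ∑ i, β i) (hb : LocallyIntegrable b) (hM : ∀ Q : BetaCube n β, osc β α b Q ≤ M)
    {Q P : BetaCube n β} (hc : Q.c = P.c) (hl : Q.l ≤ P.l) :
    ‖cubeAvg Q b - cubeAvg P b‖ ≤
      2 ^ (α + ∑ i, β i) * M / (1 - 2 ^ (α - γ)) * (Q.l ^ α * (P.l / Q.l) ^ γ) := by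
  set a : Set.Ioi (0 : ℝ) → ℂ := fun s => cubeAvg (⟨Q.c, s, s.2⟩ : BetaCube n β) b
  have ha : a ⟨P.l, P.l_pos⟩ = cubeAvg P b := by simp only [a, hc]
  rw [← ha]
  have hM0 : 0 ≤ M := (osc_nonneg β α b Q).trans (hM Q)
  refine norm_sub_le_of_forall_le_two_mul (a := a) hγ hαγ (fun s t hst hts => ?_)
    (s := ⟨Q.l, Q.l_pos⟩) hl
  have hs : (0 : ℝ) < s := s.2
  have ht : (0 : ℝ) < t := t.2
  calc ‖a s - a t‖ ≤ ((t : ℝ) / s) ^ (∑ i, β i) * ((t : ℝ) ^ α * M) :=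
        norm_cubeAvg_sub_cubeAvg_le_of_osc_le hb (BetaCube.set_subset_set_of_le hβ rfl hst) (hM _)
    _ = ((t : ℝ) / s) ^ (α + ∑ i, β i) * M * (s : ℝ) ^ α := by
        rw [Real.rpow_add (div_pos ht hs), Real.div_rpow ht.le hs.le α]
        field_simp
    _ ≤ 2 ^ (α + ∑ i, β i) * M * (s : ℝ) ^ α := by
        gcongr
        exact (div_le_iff₀ hs).2 hts

lemma exists_norm_cubeAvg_sub_cubeAvg_le_of_inter_nonempty (hγ : 0 < γ) (hγβ : ∀ i, γ ≤ β i)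
    (hαγ : α < γ) (hα : 0 ≤ α + ∑ i, β i) (hb : LocallyIntegrable b)
    (hM : ∀ Q : BetaCube n β, osc β α b Q ≤ M) :
    ∃ C, ∀ Q P : BetaCube n β, Q.l ≤ P.l → (Q.set ∩ P.set).Nonempty →
      ‖cubeAvg Q b - cubeAvg P b‖ ≤ C * (Q.l ^ α * (P.l / Q.l) ^ γ) := by
  have hβ (i) : 0 < β i := hγ.trans_le (hγβ i)
  obtain ⟨κ, hκ, hκβ⟩ := exists_forall_le_rpow hβ fun _ => 3
  have hκ0 : 0 < κ := zero_lt_one.trans_le hκ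
  set C := 2 ^ (α + ∑ i, β i) * M / (1 - 2 ^ (α - γ))
  refine ⟨C * κ ^ γ + κ ^ (∑ i, β i) * (κ ^ α * M), fun Q P hQP hne => ?_⟩
  have hQ := Q.l_pos
  have hP := P.l_pos
  have hM0 : 0 ≤ M := (osc_nonneg β α b Q).trans (hM Q)
  set T : BetaCube n β := ⟨Q.c, κ * P.l, mul_pos hκ0 hP⟩
  have hPT : P.set ⊆ T.set := BetaCube.set_subset_set_of_inter_nonempty (fun i => (hβ i).le) hne
    hQP rfl fun i => by rw [Real.mul_rpow hκ0.le hP.le]; gcongr; exact hκβ i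
  have hQT_avg : ‖cubeAvg Q b - cubeAvg T b‖ ≤ C * κ ^ γ * (Q.l ^ α * (P.l / Q.l) ^ γ) := by
    refine (norm_cubeAvg_sub_cubeAvg_le_of_center_eq (fun i => (hβ i).le) hγ.le hαγ hα hb hM
      (Q := Q) (P := T) rfl (hQP.trans (le_mul_of_one_le_left hP.le hκ))).trans_eq ?_
    rw [show T.l / Q.l = κ * (P.l / Q.l) from mul_div_assoc _ _ _,
      Real.mul_rpow hκ0.le (div_pos hP hQ).le]
    ring
  have hPT_avg : ‖cubeAvg P b - cubeAvg T b‖ ≤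
      κ ^ (∑ i, β i) * (κ ^ α * M) * (Q.l ^ α * (P.l / Q.l) ^ γ) := by
    calc ‖cubeAvg P b - cubeAvg T b‖ ≤ (κ * P.l / P.l) ^ (∑ i, β i) * ((κ * P.l) ^ α * M) :=
          norm_cubeAvg_sub_cubeAvg_le_of_osc_le hb hPT (hM T)
      _ = κ ^ (∑ i, β i) * (κ ^ α * M) * (Q.l ^ α * (P.l / Q.l) ^ α) := by
          rw [mul_div_cancel_right₀ _ hP.ne', Real.mul_rpow hκ0.le hP.le,
            Real.div_rpow hP.le hQ.le]
          field_simp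
      _ ≤ κ ^ (∑ i, β i) * (κ ^ α * M) * (Q.l ^ α * (P.l / Q.l) ^ γ) := by
          gcongr
          exact (one_le_div hQ).2 hQP
  rw [add_mul]
  refine (norm_sub_le_norm_sub_add_norm_sub _ (cubeAvg T b) _).trans (add_le_add hQT_avg ?_)
  rwa [norm_sub_rev]

end Growth

section Trunc

namespace BetaCube

variable {n : ℕ} {β : Fin n → ℝ}

/-- The anisotropic dilation taking the `β`-cubes of size `R` to unit cubes. Its target carries the
supremum norm, for which these are balls of radius `1 / 2`. -/
def rescale (β : Fin n → ℝ) (R : ℝ) (x : EuclideanSpace ℝ (Fin n)) : Fin n → ℝ :=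
  fun i => x i / R ^ β i

lemma norm_rescale_le_iff {R : ℝ} (hR : 0 < R) {x : EuclideanSpace ℝ (Fin n)} {a : ℝ}
    (ha : 0 ≤ a) : ‖rescale β R x‖ ≤ a ↔ ∀ i, |x i| ≤ a * R ^ β i := by
  simp only [pi_norm_le_iff_of_nonneg ha, rescale, Real.norm_eq_abs, abs_div,
    abs_of_pos (Real.rpow_pos_of_pos hR _), div_le_iff₀ (Real.rpow_pos_of_pos hR _)]

lemma mem_set_iff_norm_rescale_le {Q : BetaCube n β} {x : EuclideanSpace ℝ (Fin n)} :
    x ∈ Q.set ↔ ‖rescale β Q.l (x - Q.c)‖ ≤ 1 / 2 := by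
  simp only [norm_rescale_le_iff Q.l_pos one_half_pos.le, one_div_mul_eq_div]
  rfl

lemma norm_rescale_le_of_mem {Q : BetaCube n β} {γ R : ℝ} (hγβ : ∀ i, γ ≤ β i) (hQR : Q.l ≤ R)
    {x : EuclideanSpace ℝ (Fin n)} (hx : x ∈ Q.set) :
    ‖rescale β R (x - Q.c)‖ ≤ (Q.l / R) ^ γ / 2 := by
  have hQ := Q.l_pos
  have hR : 0 < R := hQ.trans_le hQR
  refine (norm_rescale_le_iff hR (by positivity)).2 fun i => (hx i).trans ?_
  have hγ : (Q.l / R) ^ β i ≤ (Q.l / R) ^ γ :=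
    Real.rpow_le_rpow_of_exponent_ge (by positivity) ((div_le_one hR).2 hQR) (hγβ i)
  rw [Real.div_rpow hQ.le hR.le, div_le_iff₀ (by positivity)] at hγ
  linarith

/-- A continuous cutoff supported in the cube `P` and equal to `1` near its centre. -/
def cutoff (P : BetaCube n β) (x : EuclideanSpace ℝ (Fin n)) : ℝ :=
  Set.projIcc (0 : ℝ) 1 zero_le_one (2 - 4 * ‖rescale β P.l (x - P.c)‖)

lemma continuous_cutoff (P : BetaCube n β) : Continuous P.cutoff := by
  unfold cutoff rescale
  exact continuous_subtype_val.comp (continuous_projIcc.comp (by fun_prop))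

lemma abs_cutoff_le_one (P : BetaCube n β) (x : EuclideanSpace ℝ (Fin n)) : |P.cutoff x| ≤ 1 :=
  abs_le.2 ⟨neg_one_lt_zero.le.trans (Set.projIcc 0 1 _ _).2.1, (Set.projIcc 0 1 _ _).2.2⟩

lemma cutoff_eq_zero {P : BetaCube n β} {x : EuclideanSpace ℝ (Fin n)} (hx : x ∉ P.set) :
    P.cutoff x = 0 := by
  rw [mem_set_iff_norm_rescale_le, not_le] at hx
  rw [cutoff, Set.projIcc_of_le_left _ (by linarith)]

lemma cutoff_eq_one {P Q : BetaCube n β} (hc : Q.c = P.c) (hl : ∀ i, 2 * Q.l ^ β i ≤ P.l ^ β i)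
    {x : EuclideanSpace ℝ (Fin n)} (hx : x ∈ Q.set) : P.cutoff x = 1 := by
  have hnorm : ‖rescale β P.l (x - P.c)‖ ≤ 1 / 4 :=
    (norm_rescale_le_iff P.l_pos (by norm_num)).2 fun i => by
      have := hx i
      rw [hc] at this
      rw [PiLp.sub_apply]
      linarith [hl i]
  rw [cutoff, Set.projIcc_of_right_le _ (by linarith)]

lemma abs_cutoff_sub_cutoff_le (P : BetaCube n β) (x y : EuclideanSpace ℝ (Fin n)) :
    |P.cutoff x - P.cutoff y| ≤ 4 * ‖rescale β P.l (x - y)‖ := by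
  have hsub : rescale β P.l (y - P.c) - rescale β P.l (x - P.c) = -rescale β P.l (x - y) := by
    ext i
    simp only [rescale, Pi.sub_apply, Pi.neg_apply, PiLp.sub_apply]
    ring
  calc |P.cutoff x - P.cutoff y|
      ≤ |4 * (‖rescale β P.l (y - P.c)‖ - ‖rescale β P.l (x - P.c)‖)| :=
        (Set.abs_projIcc_sub_projIcc zero_le_one).trans_eq (by ring_nf)
    _ = 4 * |‖rescale β P.l (y - P.c)‖ - ‖rescale β P.l (x - P.c)‖| := by
        rw [abs_mul, abs_of_pos four_pos]
    _ ≤ 4 * ‖rescale β P.l (x - y)‖ := by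
        rw [← norm_neg (rescale β P.l (x - y)), ← hsub]
        exact mul_le_mul_of_nonneg_left (abs_norm_sub_norm_le _ _) zero_le_four

end BetaCube

variable {n : ℕ} {β : Fin n → ℝ} {f : EuclideanSpace ℝ (Fin n) → ℂ} {P Q : BetaCube n β}

/-- The truncation `χ (f - ⟨f⟩_P)` of `f` to the cube `P`, where `χ` is the cutoff of `P`.
Subtracting the average keeps the oscillation of the truncation under control. -/
def trunc (P : BetaCube n β) (f : EuclideanSpace ℝ (Fin n) → ℂ) : EuclideanSpace ℝ (Fin n) → ℂ :=
  P.cutoff • fun x => f x - cubeAvg P f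

lemma trunc_eq_zero {x : EuclideanSpace ℝ (Fin n)} (hx : x ∉ P.set) : trunc P f x = 0 := by
  rw [trunc, Pi.smul_apply', P.cutoff_eq_zero hx, zero_smul]

lemma norm_trunc_le (x : EuclideanSpace ℝ (Fin n)) : ‖trunc P f x‖ ≤ ‖f x - cubeAvg P f‖ := by
  rw [trunc, Pi.smul_apply', norm_smul]
  exact mul_le_of_le_one_left (norm_nonneg _) (P.abs_cutoff_le_one x)

lemma hasCompactSupport_trunc (P : BetaCube n β) (f : EuclideanSpace ℝ (Fin n) → ℂ) :
    HasCompactSupport (trunc P f) :=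
  HasCompactSupport.intro P.isCompact_set fun _ => trunc_eq_zero

lemma locallyIntegrable_trunc (hf : LocallyIntegrable f) (P : BetaCube n β) :
    LocallyIntegrable (trunc P f) := by
  have h := hf.sub (locallyIntegrable_const (cubeAvg P f))
  exact h.mono (P.continuous_cutoff.aestronglyMeasurable.smul h.aestronglyMeasurable)
    (.of_forall norm_trunc_le)

variable [NeZero (∑ i, β i)] {α γ M : ℝ}

lemma osc_trunc_eq_zero_of_disjoint (hf : LocallyIntegrable f) (h : Disjoint Q.set P.set) :
    osc β α (trunc P f) Q = 0 := by
  refine (osc_nonneg β α _ Q).antisymm' ?_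
  have h0 (x) (hx : x ∈ Q.set) : ‖trunc P f x - 0‖ ≤ 0 := by
    rw [trunc_eq_zero (h.notMem_of_mem_left hx), sub_self, norm_zero]
  simpa only [mul_zero] using osc_le_of_norm_sub_le (α := α) (locallyIntegrable_trunc hf P) Q h0

lemma osc_trunc_le_of_l_le (hα : 0 ≤ α + ∑ i, β i) (hf : LocallyIntegrable f)
    (hPQ : P.l ≤ Q.l) : osc β α (trunc P f) Q ≤ 2 * osc β α f P := by
  have hP := P.l_pos
  have hQ := Q.l_pos
  have hf' := hf.sub (locallyIntegrable_const (cubeAvg P f))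
  have hosc := osc_nonneg β α f P
  have hmean : ∫ x, ‖trunc P f x - 0‖ ∂Q.measure ≤
      (P.l / Q.l) ^ (∑ i, β i) * (P.l ^ α * osc β α f P) := by
    refine (BetaCube.integral_measure_le_of_eq_zero (P := P)
      (locallyIntegrable_norm_sub_const (locallyIntegrable_trunc hf P) 0)
      (fun _ => norm_nonneg _) fun x hx => ?_).trans ?_
    · rw [trunc_eq_zero hx.2, sub_self, norm_zero]
    rw [← meanOsc_eq_rpow_mul_osc, meanOsc, ← cubeAvg_eq]
    refine mul_le_mul_of_nonneg_left (integral_mono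
      (integrable_norm_sub_const (P.integrable_measure (locallyIntegrable_trunc hf P)) 0)
      (P.integrable_measure hf').norm fun x => ?_) (by positivity)
    simpa only [sub_zero] using norm_trunc_le x
  calc osc β α (trunc P f) Q
      ≤ Q.l ^ (-α) * (2 * ((P.l / Q.l) ^ (∑ i, β i) * (P.l ^ α * osc β α f P))) := by
        rw [osc_eq]
        have := (meanOsc_le_two_mul_integral_norm_sub
          (Q.integrable_measure (locallyIntegrable_trunc hf P)) 0).trans
            (mul_le_mul_of_nonneg_left hmean zero_le_two)
        gcongr
    _ = (P.l / Q.l) ^ (α + ∑ i, β i) * (2 * osc β α f P) := by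
        rw [Real.rpow_add (div_pos hP hQ), Real.div_rpow hP.le hQ.le α, Real.rpow_neg hQ.le]
        field_simp
    _ ≤ 2 * osc β α f P := mul_le_of_le_one_left (by positivity)
        (Real.rpow_le_one (by positivity) ((div_le_one hQ).2 hPQ) hα)

-- The cutoff varies by at most `2 * (Q.l / P.l) ^ γ` on `Q`, which offsets the growth of the
-- averages of `f`.
lemma osc_trunc_le_of_norm_cubeAvg_sub_cubeAvg_le (hγβ : ∀ i, γ ≤ β i) (hf : LocallyIntegrable f)
    (hQP : Q.l ≤ P.l) {C : ℝ}
    (hC : ‖cubeAvg Q f - cubeAvg P f‖ ≤ C * (Q.l ^ α * (P.l / Q.l) ^ γ)) :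
    osc β α (trunc P f) Q ≤ 2 * (osc β α f Q + 2 * C) := by
  have hP := P.l_pos
  have hQ := Q.l_pos
  have hint := Q.integrable_measure (hf.sub (locallyIntegrable_const (cubeAvg P f)))
  have hcutoff (x) (hx : x ∈ Q.set) : |P.cutoff x - P.cutoff Q.c| ≤ 2 * (Q.l / P.l) ^ γ :=
    (P.abs_cutoff_sub_cutoff_le x Q.c).trans
      (by linarith [BetaCube.norm_rescale_le_of_mem hγβ hQP hx])
  have hmean := meanOsc_smul_le hint P.continuous_cutoff.aestronglyMeasurable
    (.of_forall P.abs_cutoff_le_one) (BetaCube.ae_measure_of_forall_mem hcutoff)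
  have hint_eq : ∫ x, (f x - cubeAvg P f) ∂Q.measure = cubeAvg Q f - cubeAvg P f := by
    rw [integral_sub (Q.integrable_measure hf) (integrable_const _), integral_const,
      probReal_univ, one_smul, cubeAvg_eq Q]
  have hcancel : (Q.l / P.l) ^ γ * (P.l / Q.l) ^ γ = 1 := by
    rw [← Real.mul_rpow (div_pos hQ hP).le (div_pos hP hQ).le, div_mul_div_cancel₀ hP.ne',
      div_self hQ.ne', Real.one_rpow]
  rw [← mul_le_mul_iff_right₀ (Real.rpow_pos_of_pos hQ α), ← meanOsc_eq_rpow_mul_osc]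
  calc meanOsc (trunc P f) Q.measure
      ≤ 2 * (Q.l ^ α * osc β α f Q + 2 * (Q.l / P.l) ^ γ * ‖cubeAvg Q f - cubeAvg P f‖) := by
        rw [← meanOsc_eq_rpow_mul_osc, ← meanOsc_sub_const (Q.integrable_measure hf) (cubeAvg P f),
          ← hint_eq]
        exact hmean
    _ ≤ 2 * (Q.l ^ α * osc β α f Q +
          2 * (Q.l / P.l) ^ γ * (C * (Q.l ^ α * (P.l / Q.l) ^ γ))) := by gcongr
    _ = Q.l ^ α * (2 * (osc β α f Q + 2 * C)) := by
        linear_combination 4 * C * Q.l ^ α * hcancel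

lemma exists_forall_osc_trunc_le (hγ : 0 < γ) (hγβ : ∀ i, γ ≤ β i) (hαγ : α < γ)
    (hα : 0 ≤ α + ∑ i, β i) (hf : LocallyIntegrable f)
    (hM : ∀ Q : BetaCube n β, osc β α f Q ≤ M) :
    ∃ C, ∀ P Q : BetaCube n β, osc β α (trunc P f) Q ≤ C := by
  obtain ⟨C, hC⟩ := exists_norm_cubeAvg_sub_cubeAvg_le_of_inter_nonempty hγ hγβ hαγ hα hf hM
  refine ⟨max (2 * M) (2 * (M + 2 * C)), fun P Q => ?_⟩
  obtain hdisj | hmeet := Q.set.disjoint_or_nonempty_inter P.set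
  · rw [osc_trunc_eq_zero_of_disjoint hf hdisj]
    exact le_max_of_le_left (mul_nonneg zero_le_two ((osc_nonneg β α f Q).trans (hM Q)))
  obtain hQP | hPQ := le_total Q.l P.l
  · refine le_max_of_le_right ((osc_trunc_le_of_norm_cubeAvg_sub_cubeAvg_le hγβ hf hQP
      (hC Q P hQP hmeet)).trans ?_)
    linarith [hM Q]
  · exact le_max_of_le_left ((osc_trunc_le_of_l_le hα hf hPQ).trans (by linarith [hM P]))

end Trunc

section Averaging

lemma exists_seminorm_natCast_smul_sub_le {V ι : Type*} [AddCommGroup V] [Module ℝ V]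
    {p : ι → Seminorm ℝ V} {l : Filter ι} {W : Submodule ℝ V} {f : V} {C ε : ℝ} (hε : 0 < ε)
    (hf : Filter.Tendsto (fun i => p i f) l (nhds 0))
    (hW : ∀ g ∈ W, Filter.Tendsto (fun i => p i g) l (nhds 0))
    (H : ∀ s ∈ l, ∃ g ∈ W, (∀ i, p i (f - g) ≤ C) ∧ ∀ i ∉ s, p i (f - g) ≤ ε) (N : ℕ) :
    ∃ G ∈ W, ∀ i, p i ((N : ℝ) • f - G) ≤ C + N * ε := by
  induction N with
  | zero =>
    refine ⟨0, W.zero_mem, fun i => ?_⟩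
    obtain ⟨g, -, hgC, -⟩ := H _ Filter.univ_mem
    rw [Nat.cast_zero, zero_smul, sub_zero, map_zero, zero_mul, add_zero]
    exact (apply_nonneg (p i) (f - g)).trans (hgC i)
  | succ N ih =>
    obtain ⟨G, hG, hGN⟩ := ih
    have hlim : Filter.Tendsto (fun i => p i ((N : ℝ) • f - G)) l (nhds 0) := by
      refine squeeze_zero (fun i => apply_nonneg _ _) (fun i => map_sub_le_add (p i) _ _) ?_
      simpa only [map_smul_eq_mul, mul_zero, add_zero] using (hf.const_mul ‖(N : ℝ)‖).add (hW G hG)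
    obtain ⟨g, hg, hgC, hgε⟩ := H _ (hlim.eventually_le_const hε)
    refine ⟨G + g, W.add_mem hG hg, fun i => ?_⟩
    have hsplit : ((N + 1 : ℕ) : ℝ) • f - (G + g) = ((N : ℝ) • f - G) + (f - g) := by
      rw [Nat.cast_succ, add_smul, one_smul, add_sub_add_comm]
    rw [hsplit, Nat.cast_succ]
    refine (map_add_le_add (p i) _ _).trans ?_
    -- Each index is bad for the old sum or for the new summand, but not for both.
    by_cases hi : p i ((N : ℝ) • f - G) ≤ ε
    · linarith [hgC i, mul_nonneg N.cast_nonneg hε.le]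
    · linarith [hGN i, hgε i hi]

lemma exists_seminorm_sub_le_of_forall_mem_exists {V ι : Type*} [AddCommGroup V] [Module ℝ V]
    {p : ι → Seminorm ℝ V} {l : Filter ι} {W : Submodule ℝ V} {f : V} {C ε : ℝ} (hε : 0 < ε)
    (hf : Filter.Tendsto (fun i => p i f) l (nhds 0))
    (hW : ∀ g ∈ W, Filter.Tendsto (fun i => p i g) l (nhds 0))
    (H : ∀ s ∈ l, ∀ δ > 0, ∃ g ∈ W, (∀ i, p i (f - g) ≤ C) ∧ ∀ i ∉ s, p i (f - g) ≤ δ) :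
    ∃ g ∈ W, ∀ i, p i (f - g) ≤ ε := by
  obtain ⟨N, hN⟩ := exists_nat_gt (max 0 (C / (ε / 2)))
  obtain ⟨hN_pos, hCN⟩ := max_lt_iff.1 hN
  obtain ⟨G, hG, hGN⟩ := exists_seminorm_natCast_smul_sub_le (half_pos hε) hf hW
    (fun s hs => H s hs _ (half_pos hε)) N
  refine ⟨(N : ℝ)⁻¹ • G, W.smul_mem _ hG, fun i => ?_⟩
  have hmean : f - (N : ℝ)⁻¹ • G = (N : ℝ)⁻¹ • ((N : ℝ) • f - G) := by
    rw [smul_sub, inv_smul_smul₀ hN_pos.ne']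
  rw [hmean, map_smul_eq_mul, Real.norm_of_nonneg (inv_nonneg.2 hN_pos.le),
    inv_mul_le_iff₀ hN_pos]
  linarith [hGN i, (div_lt_iff₀ (half_pos hε)).1 hCN]

end Averaging

section Approximation

variable {n : ℕ} {β : Fin n → ℝ} {α γ M : ℝ} [NeZero (∑ i, β i)]
  {f : EuclideanSpace ℝ (Fin n) → ℂ}

lemma osc_sub_trunc_eq_zero (hf : LocallyIntegrable f) {P P₀ Q : BetaCube n β} (hc : P₀.c = P.c)
    (hl : ∀ i, 2 * P₀.l ^ β i ≤ P.l ^ β i) (hQ : Q.set ⊆ P₀.set) :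
    osc β α (f - trunc P f) Q = 0 := by
  refine (osc_nonneg β α _ Q).antisymm' ?_
  have hconst (x) (hx : x ∈ Q.set) : ‖(f - trunc P f) x - cubeAvg P f‖ ≤ 0 := by
    rw [Pi.sub_apply, trunc, Pi.smul_apply', BetaCube.cutoff_eq_one hc hl (hQ hx), one_smul,
      sub_sub_cancel, sub_self, norm_zero]
  simpa only [mul_zero] using
    osc_le_of_norm_sub_le (α := α) (hf.sub (locallyIntegrable_trunc hf P)) Q hconst

lemma exists_contDiff_osc_sub_le (hβ : ∀ i, 0 < β i) (hα : 0 ≤ α + ∑ i, β i)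
    (hf : LocallyIntegrable f) {C : ℝ} (hC : ∀ P Q : BetaCube n β, osc β α (trunc P f) Q ≤ C)
    (hM : ∀ Q : BetaCube n β, osc β α f Q ≤ M) {r ε : ℝ} (hr : 0 < r) (hε : 0 < ε)
    (P₀ : BetaCube n β) :
    ∃ g : EuclideanSpace ℝ (Fin n) → ℂ, ContDiff ℝ (⊤ : ℕ∞) g ∧ HasCompactSupport g ∧
      (∀ Q : BetaCube n β, osc β α (f - g) Q ≤ M + C) ∧
      ∀ Q : BetaCube n β, r ≤ Q.l → Q.set ⊆ P₀.set → osc β α (f - g) Q ≤ ε := by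
  obtain ⟨κ, hκ, hκβ⟩ := exists_forall_le_rpow hβ fun _ => 2
  have hκ_pos := zero_lt_one.trans_le hκ
  set P : BetaCube n β := ⟨P₀.c, κ * P₀.l, mul_pos hκ_pos P₀.l_pos⟩
  have hl (i) : 2 * P₀.l ^ β i ≤ P.l ^ β i := by
    rw [Real.mul_rpow hκ_pos.le P₀.l_pos.le]
    exact mul_le_mul_of_nonneg_right (hκβ i) (Real.rpow_nonneg P₀.l_pos.le _)
  have hh := locallyIntegrable_trunc hf P
  have hK : 0 < 2 * (P₀.l / r) ^ (α + ∑ i, β i) := by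
    have := P₀.l_pos
    positivity
  obtain ⟨δ, hδ, hmollify⟩ := exists_forall_osc_sub_mollify_le (α := α) hh P₀ (div_pos hε hK)
  set φ : ContDiffBump (0 : EuclideanSpace ℝ (Fin n)) :=
    ⟨δ / 2, δ, half_pos hδ, half_lt_self hδ⟩
  have hg := contDiff_mollify φ hh
  have hg_loc : LocallyIntegrable (mollify φ (trunc P f)) := hg.continuous.locallyIntegrable
  refine ⟨mollify φ (trunc P f), hg, hasCompactSupport_mollify φ (hasCompactSupport_trunc P f),
    fun Q => ?_, fun Q hrQ hQ => ?_⟩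
  · rw [sub_eq_add_neg]
    refine (osc_add_le hf hg_loc.neg Q).trans (add_le_add (hM Q) ?_)
    rw [osc_neg]
    exact osc_mollify_le φ hh Q fun v _ => hC P _
  · rw [← sub_add_sub_cancel f (trunc P f)]
    refine (osc_add_le (hf.sub hh) (hh.sub hg_loc) Q).trans ?_
    rw [osc_sub_trunc_eq_zero hf (P := P) (P₀ := P₀) rfl hl hQ, zero_add]
    calc osc β α (trunc P f - mollify φ (trunc P f)) Q
        ≤ 2 * (P₀.l / Q.l) ^ (α + ∑ i, β i) * osc β α (trunc P f - mollify φ (trunc P f)) P₀ :=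
          osc_le_of_subset (hh.sub hg_loc) hQ
      _ ≤ 2 * (P₀.l / r) ^ (α + ∑ i, β i) * (ε / (2 * (P₀.l / r) ^ (α + ∑ i, β i))) := by
          have := osc_nonneg β α (trunc P f - mollify φ (trunc P f)) P₀
          have := P₀.l_pos
          have := Q.l_pos
          gcongr
          exact hmollify φ le_rfl
      _ = ε := mul_div_cancel₀ ε hK.ne'

/-- The space of locally integrable functions, not identified almost everywhere, as the domain of
the seminorms `oscSeminorm`. -/
def locallyIntegrableSubmodule (n : ℕ) : Submodule ℝ (EuclideanSpace ℝ (Fin n) → ℂ) where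
  carrier := {b | LocallyIntegrable b volume}
  add_mem' ha hb := Set.mem_ofPred.2 (ha.out.add hb.out)
  zero_mem' := locallyIntegrable_zero
  smul_mem' k _ hb := Set.mem_ofPred.2 (hb.out.smul k)

/-- The oscillation over a fixed cube as a seminorm in the function. -/
def oscSeminorm (β : Fin n → ℝ) (α : ℝ) [NeZero (∑ i, β i)] (Q : BetaCube n β) :
    Seminorm ℝ (locallyIntegrableSubmodule n) :=
  Seminorm.of (fun b => osc β α b Q) (fun a b => osc_add_le a.2.out b.2.out Q)
    fun k _ => osc_const_smul k Q

/-- The space `C_c^∞(ℝⁿ)` inside the locally integrable functions. -/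
def smoothCompactSupportSubmodule (n : ℕ) : Submodule ℝ (locallyIntegrableSubmodule n) where
  carrier := {g | ContDiff ℝ (⊤ : ℕ∞) g.1 ∧ HasCompactSupport g.1}
  add_mem' ha hb := ⟨ha.1.add hb.1, ha.2.add hb.2⟩
  zero_mem' := ⟨contDiff_const, HasCompactSupport.zero⟩
  smul_mem' k _ hb := ⟨contDiff_const.smul hb.1, hb.2.smul_left (f := fun _ => k)⟩

lemma MemVMO.exists_contDiff_osc_sub_le_of_lt (hβ : ∀ i, 0 < β i) (hα_pos : 0 < α + ∑ i, β i)
    (hα : ∀ i, α < β i) (hf : MemVMO β α f) {ε : ℝ} (hε : 0 < ε) :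
    ∃ g : EuclideanSpace ℝ (Fin n) → ℂ, ContDiff ℝ (⊤ : ℕ∞) g ∧ HasCompactSupport g ∧
      ∀ Q : BetaCube n β, osc β α (f - g) Q ≤ ε := by
  obtain ⟨M, hM⟩ := hf.2.1
  obtain ⟨γ, hγβ, hαγ⟩ : ∃ γ, (∀ i, γ ≤ β i) ∧ max 0 α < γ :=
    ((Filter.eventually_all.2 fun i => eventually_nhdsWithin_of_eventually_nhds
      (eventually_le_nhds (max_lt (hβ i) (hα i)))).and
        (self_mem_nhdsWithin : Set.Ioi (max 0 α) ∈ _)).exists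
  obtain ⟨C, hC⟩ := exists_forall_osc_trunc_le ((le_max_left 0 α).trans_lt hαγ) hγβ
    ((le_max_right 0 α).trans_lt hαγ) hα_pos.le hf.1 hM
  obtain ⟨g, ⟨hg, hg_supp⟩, hfg⟩ := exists_seminorm_sub_le_of_forall_mem_exists
    (p := oscSeminorm β α) (l := BetaCube.escape β) (W := smoothCompactSupportSubmodule n)
    (f := ⟨f, Set.mem_ofPred.2 hf.1⟩) (C := M + C) hε
    (tendsto_osc_escape_of_memVMO (fun i => (hβ i).le) hα_pos.le hf)
    (fun g hg => tendsto_osc_escape_of_contDiff (fun i => (hβ i).le) hα_pos hα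
      (hg.1.of_le (by simp)) hg.2) fun s hs δ hδ => by
      obtain ⟨r, hr, P₀, hP₀⟩ := BetaCube.exists_forall_le_and_subset_of_eventually_escape hβ hs
      obtain ⟨g, hg, hg_supp, hgC, hgδ⟩ :=
        exists_contDiff_osc_sub_le hβ hα_pos.le hf.1 hC hM hr hδ P₀
      exact ⟨⟨g, hg.continuous.locallyIntegrable⟩, ⟨hg, hg_supp⟩, hgC, fun Q hQ =>
        hgδ Q (hP₀ Q hQ).1 (hP₀ Q hQ).2⟩
  exact ⟨g, hg, hg_supp, hfg⟩

end Approximation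

section Rigidity

variable {n : ℕ} {β : Fin n → ℝ} {α : ℝ} {b f F : EuclideanSpace ℝ (Fin n) → ℂ}

lemma BetaCube.translate_set_subset_set {Q P : BetaCube n β} {v : EuclideanSpace ℝ (Fin n)}
    (hc : P.c = Q.c) (hv : ∀ i, |v i| ≤ Q.l ^ β i) (hl : ∀ i, 3 * Q.l ^ β i ≤ P.l ^ β i) :
    (Q.translate v).set ⊆ P.set := fun x hx i => by
  have hxv : |x i - (Q.c i + v i)| ≤ Q.l ^ β i / 2 := hx i
  rw [hc]
  calc |x i - Q.c i| = |(x i - (Q.c i + v i)) + v i| := by ring_nf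
    _ ≤ |x i - (Q.c i + v i)| + |v i| := abs_add_le _ _
    _ ≤ P.l ^ β i / 2 := by linarith [hv i, hl i]

lemma tendsto_cubeAvg_of_continuousAt (hβ : ∀ i, 0 < β i) (hb : LocallyIntegrable b)
    {x : EuclideanSpace ℝ (Fin n)} (hx : ContinuousAt b x) :
    Filter.Tendsto (fun Q : BetaCube n β => cubeAvg Q b)
      (Filter.comap BetaCube.l (nhds 0) ⊓ Filter.comap BetaCube.c (nhds x)) (nhds (b x)) := by
  refine Metric.nhds_basis_closedBall.tendsto_right_iff.2 fun η hη => ?_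
  obtain ⟨δ, hδ, hball⟩ := Metric.nhds_basis_ball.eventually_iff.1
    (hx.eventually (Metric.closedBall_mem_nhds _ hη))
  have hdiam : Filter.Tendsto (fun s : ℝ => ∑ i, s ^ β i) (nhds 0) (nhds 0) := by
    have hcont : ContinuousAt (fun s : ℝ => ∑ i, s ^ β i) 0 :=
      tendsto_finsetSum _ fun i _ => Real.continuousAt_rpow_const 0 (β i) (.inr (hβ i).le)
    simpa only [ContinuousAt, Real.zero_rpow (hβ _).ne', Finset.sum_const_zero] using hcont
  have hl : ∀ᶠ Q : BetaCube n β in Filter.comap BetaCube.l (nhds 0), ∑ i, Q.l ^ β i < δ / 2 :=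
    (hdiam.comp Filter.tendsto_comap).eventually_lt_const (half_pos hδ)
  have hc : ∀ᶠ Q : BetaCube n β in Filter.comap BetaCube.c (nhds x), Q.c ∈ Metric.ball x (δ / 2) :=
    Filter.tendsto_comap.eventually (Metric.ball_mem_nhds x (half_pos hδ))
  filter_upwards [Filter.mem_inf_of_left hl, Filter.mem_inf_of_right hc] with Q hQl hQc
  rw [cubeAvg_eq]
  refine (convex_closedBall (b x) η).integral_mem Metric.isClosed_closedBall
    (BetaCube.ae_measure_of_forall_mem fun y hy => hball ?_) (Q.integrable_measure hb)
  rw [Metric.mem_ball] at hQc ⊢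
  have := BetaCube.norm_sub_center_le hy
  rw [← dist_eq_norm] at this
  linarith [dist_triangle y Q.c x]

variable [NeZero (∑ i, β i)]

lemma norm_cubeAvg_translate_sub_cubeAvg_le (hβ : ∀ i, 0 ≤ β i) (hb : LocallyIntegrable b) {κ : ℝ}
    (hκ : 1 ≤ κ) (hκβ : ∀ i, 3 ≤ κ ^ β i) {Q P : BetaCube n β} (hc : P.c = Q.c)
    (hl : P.l = κ * Q.l) {η : ℝ} (hη : osc β α b P ≤ η) {v : EuclideanSpace ℝ (Fin n)}
    (hv : ∀ i, |v i| ≤ Q.l ^ β i) :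
    ‖cubeAvg (Q.translate v) b - cubeAvg Q b‖ ≤ 2 * κ ^ (α + ∑ i, β i) * (Q.l ^ α * η) := by
  have hQ := Q.l_pos
  have hκ_pos : 0 < κ := zero_lt_one.trans_le hκ
  have hP_ge (i) : 3 * Q.l ^ β i ≤ P.l ^ β i := by
    rw [hl, Real.mul_rpow hκ_pos.le hQ.le]
    exact mul_le_mul_of_nonneg_right (hκβ i) (Real.rpow_nonneg hQ.le _)
  have hQP : Q.set ⊆ P.set :=
    BetaCube.set_subset_set_of_le hβ hc.symm (hl ▸ le_mul_of_one_le_left hQ.le hκ)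
  have hconst : (P.l / Q.l) ^ (∑ i, β i) * (P.l ^ α * η) =
      κ ^ (α + ∑ i, β i) * (Q.l ^ α * η) := by
    rw [hl, mul_div_cancel_right₀ _ hQ.ne', Real.mul_rpow hκ_pos.le hQ.le, Real.rpow_add hκ_pos]
    ring
  calc ‖cubeAvg (Q.translate v) b - cubeAvg Q b‖
      ≤ ‖cubeAvg (Q.translate v) b - cubeAvg P b‖ + ‖cubeAvg Q b - cubeAvg P b‖ := by
        rw [norm_sub_rev (cubeAvg Q b)]
        exact norm_sub_le_norm_sub_add_norm_sub _ _ _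
    _ ≤ (P.l / Q.l) ^ (∑ i, β i) * (P.l ^ α * η) + (P.l / Q.l) ^ (∑ i, β i) * (P.l ^ α * η) :=
        add_le_add
          (norm_cubeAvg_sub_cubeAvg_le_of_osc_le hb
            (BetaCube.translate_set_subset_set hc hv hP_ge) hη)
          (norm_cubeAvg_sub_cubeAvg_le_of_osc_le hb hQP hη)
    _ = 2 * κ ^ (α + ∑ i, β i) * (Q.l ^ α * η) := by rw [hconst]; ring

lemma norm_cubeAvg_translate_nsmul_sub_cubeAvg_le (hβ : ∀ i, 0 ≤ β i) (hb : LocallyIntegrable b)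
    {κ : ℝ} (hκ : 1 ≤ κ) (hκβ : ∀ i, 3 ≤ κ ^ β i) {Q : BetaCube n β} {η : ℝ}
    (hη : ∀ P : BetaCube n β, P.l = κ * Q.l → osc β α b P ≤ η) {v : EuclideanSpace ℝ (Fin n)}
    (hv : ∀ i, |v i| ≤ Q.l ^ β i) (N : ℕ) :
    ‖cubeAvg (Q.translate (N • v)) b - cubeAvg Q b‖ ≤
      N * (2 * κ ^ (α + ∑ i, β i) * (Q.l ^ α * η)) := by
  induction N with
  | zero => simp [BetaCube.translate]
  | succ N ih =>
    have htranslate : Q.translate ((N + 1) • v) = (Q.translate (N • v)).translate v := by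
      simp only [BetaCube.translate, succ_nsmul, add_assoc]
    rw [htranslate, Nat.cast_succ, add_one_mul, add_comm]
    refine (norm_sub_le_norm_sub_add_norm_sub _ (cubeAvg (Q.translate (N • v)) b) _).trans
      (add_le_add ?_ ih)
    exact norm_cubeAvg_translate_sub_cubeAvg_le hβ hb hκ hκβ (Q := Q.translate (N • v))
      (P := ⟨(Q.translate (N • v)).c, κ * Q.l, mul_pos (zero_lt_one.trans_le hκ) Q.l_pos⟩)
      rfl rfl (hη _ rfl) hv

lemma exists_nat_abs_div_le_rpow_and_mul_rpow_le {s γ : ℝ} (hs : 0 < s) (hs_one : s ≤ 1)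
    (hγ : 0 ≤ γ) (hγα : γ ≤ α) (t : ℝ) :
    ∃ N : ℕ, 0 < N ∧ |t / N| ≤ s ^ γ ∧ N * s ^ α ≤ |t| + 1 := by
  have hsγ : 0 < s ^ γ := Real.rpow_pos_of_pos hs _
  refine ⟨⌊|t| / s ^ γ⌋₊ + 1, Nat.succ_pos _, ?_, ?_⟩
  · rw [abs_div, Nat.abs_cast, div_le_comm₀ (Nat.cast_pos.2 (Nat.succ_pos _)) hsγ]
    exact_mod_cast (Nat.lt_floor_add_one _).le
  · have hfloor : ((⌊|t| / s ^ γ⌋₊ + 1 : ℕ) : ℝ) ≤ |t| / s ^ γ + 1 := by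
      rw [Nat.cast_succ]
      exact add_le_add_left (Nat.floor_le (by positivity)) 1
    calc ((⌊|t| / s ^ γ⌋₊ + 1 : ℕ) : ℝ) * s ^ α ≤ (|t| / s ^ γ + 1) * s ^ γ :=
          mul_le_mul hfloor (Real.rpow_le_rpow_of_exponent_ge hs hs_one hγα)
            (by positivity) (by positivity)
      _ = |t| + s ^ γ := by field_simp
      _ ≤ |t| + 1 := add_le_add_right (Real.rpow_le_one hs.le hs_one hγ) _

-- A step of length `s ^ β i` costs `o(s ^ α)`, hence the `|t| / s ^ β i` steps needed to cover the
-- distance `t` cost `o(1)` in total.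
lemma tendsto_cubeAvg_translate_single_sub_cubeAvg (hβ : ∀ i, 0 < β i) (hb : LocallyIntegrable b)
    {i : Fin n} (hi : β i ≤ α)
    (h : Filter.Tendsto (osc β α b) (Filter.comap BetaCube.l (nhds 0)) (nhds 0)) (t : ℝ) :
    Filter.Tendsto (fun Q : BetaCube n β =>
        cubeAvg (Q.translate (EuclideanSpace.single i t)) b - cubeAvg Q b)
      (Filter.comap BetaCube.l (nhds 0)) (nhds 0) := by
  obtain ⟨κ, hκ, hκβ⟩ := exists_forall_le_rpow hβ fun _ => 3
  have hκ_pos : 0 < κ := zero_lt_one.trans_le hκ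
  set C := 2 * κ ^ (α + ∑ i, β i)
  have hC : 0 < C := by positivity
  refine tendsto_zero_iff_norm_tendsto_zero.2
    (tendsto_zero_of_forall_eventually_le (fun _ => norm_nonneg _) fun ε hε => ?_)
  set η := ε / ((|t| + 1) * C)
  have hη : 0 < η := by positivity
  obtain ⟨r, hr, hosc⟩ := BetaCube.eventually_comap_l_nhds_zero.1 (h.eventually_le_const hη)
  refine BetaCube.eventually_comap_l_nhds_zero.2 ⟨min 1 (r / κ), by positivity, fun Q hQ => ?_⟩
  obtain ⟨hQ_le_one, hQr⟩ := le_min_iff.1 hQ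
  have hQ_pos := Q.l_pos
  obtain ⟨N, hN_pos, hstep, hN_le⟩ :=
    exists_nat_abs_div_le_rpow_and_mul_rpow_le hQ_pos hQ_le_one (hβ i).le hi t
  have hv (j) : |EuclideanSpace.single i (t / (N : ℝ)) j| ≤ Q.l ^ β j := by
    obtain rfl | hj := eq_or_ne j i
    · simpa using hstep
    · simpa [hj] using Real.rpow_nonneg hQ_pos.le _
  have hchain := norm_cubeAvg_translate_nsmul_sub_cubeAvg_le (fun i => (hβ i).le) hb hκ hκβ
    (fun P hP => hosc P (hP.trans_le ((le_div_iff₀' hκ_pos).1 hQr))) hv N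
  have hNv : N • EuclideanSpace.single i (t / (N : ℝ)) = EuclideanSpace.single i t := by
    ext j
    obtain rfl | hj := eq_or_ne j i
    · simp [mul_div_cancel₀ t (Nat.cast_ne_zero.2 hN_pos.ne')]
    · simp [hj]
  rw [hNv] at hchain
  calc ‖cubeAvg (Q.translate (EuclideanSpace.single i t)) b - cubeAvg Q b‖
      ≤ N * (C * (Q.l ^ α * η)) := hchain
    _ = N * Q.l ^ α * (C * η) := by ring
    _ ≤ (|t| + 1) * (C * η) := by gcongr
    _ = ε := by simp only [η]; field_simp

lemma apply_add_single_eq_of_tendsto_osc (hβ : ∀ i, 0 < β i) (hF : Continuous F) {i : Fin n}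
    (hi : β i ≤ α) (h : Filter.Tendsto (osc β α F) (Filter.comap BetaCube.l (nhds 0)) (nhds 0))
    (x : EuclideanSpace ℝ (Fin n)) (t : ℝ) : F (x + EuclideanSpace.single i t) = F x := by
  set Q : EuclideanSpace ℝ (Fin n) → ℕ → BetaCube n β := fun y k =>
    ⟨y, 1 / ((k : ℝ) + 1), Nat.one_div_pos_of_nat⟩
  have hl (y) : Filter.Tendsto (Q y) Filter.atTop (Filter.comap BetaCube.l (nhds 0)) :=
    Filter.tendsto_comap_iff.2 tendsto_one_div_add_atTop_nhds_zero_nat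
  have hc (y) : Filter.Tendsto (Q y) Filter.atTop (Filter.comap BetaCube.c (nhds y)) :=
    Filter.tendsto_comap_iff.2 tendsto_const_nhds
  have havg (y) : Filter.Tendsto (fun k => cubeAvg (Q y k) F) Filter.atTop (nhds (F y)) :=
    (tendsto_cubeAvg_of_continuousAt hβ hF.locallyIntegrable hF.continuousAt).comp
      (Filter.tendsto_inf.2 ⟨hl y, hc y⟩)
  have hdiff : Filter.Tendsto
      (fun k => cubeAvg ((Q x k).translate (EuclideanSpace.single i t)) F - cubeAvg (Q x k) F)
      Filter.atTop (nhds 0) :=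
    (tendsto_cubeAvg_translate_single_sub_cubeAvg hβ hF.locallyIntegrable hi h t).comp (hl x)
  exact sub_eq_zero.1 (tendsto_nhds_unique ((havg _).sub (havg x)) hdiff)

lemma MemVMO.memVMO_mollify (hf : MemVMO β α f) (φ : ContDiffBump (0 : EuclideanSpace ℝ (Fin n))) :
    MemVMO β α (mollify φ f) := by
  obtain ⟨hf_loc, ⟨M, hM⟩, h_small, h_large, h_far⟩ := hf
  refine ⟨(contDiff_mollify φ hf_loc).continuous.locallyIntegrable,
    ⟨M, fun Q => osc_mollify_le φ hf_loc Q fun v _ => hM _⟩, fun ε hε => ?_, fun ε hε => ?_,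
    fun Q ε hε => ?_⟩
  · exact (h_small ε hε).imp fun r ⟨hr, H⟩ =>
      ⟨hr, fun Q hQ => osc_mollify_le φ hf_loc Q fun v _ => H _ hQ⟩
  · exact (h_large ε hε).imp fun r ⟨hr, H⟩ =>
      ⟨hr, fun Q hQ => osc_mollify_le φ hf_loc Q fun v _ => H _ hQ⟩
  · obtain ⟨R, HR⟩ := h_far Q ε hε
    refine ⟨R + φ.rOut, fun x hx => osc_mollify_le φ hf_loc _ fun v hv => ?_⟩
    have htranslate : (Q.translate x).translate v = Q.translate (x + v) := by
      simp only [BetaCube.translate, add_assoc]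
    rw [htranslate]
    refine HR _ ?_
    linarith [norm_le_add_norm_add x v]

lemma MemVMO.osc_eq_zero_of_continuous (hβ : ∀ i, 0 < β i) {i : Fin n} (hi : β i ≤ α)
    (hF : MemVMO β α F) (hF_cont : Continuous F) (Q : BetaCube n β) : osc β α F Q = 0 := by
  obtain ⟨-, -, h_small, -, h_far⟩ := hF
  have hlim := tendsto_zero_of_forall_eventually_le (osc_nonneg β α F) fun ε hε =>
    BetaCube.eventually_comap_l_nhds_zero.2 (h_small ε hε)
  refine le_antisymm (le_of_forall_pos_le_add fun ε hε => ?_) (osc_nonneg β α F Q)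
  obtain ⟨R, HR⟩ := h_far Q ε hε
  have hinv : (fun x => F (x + EuclideanSpace.single i |R|)) = F :=
    funext fun x => apply_add_single_eq_of_tendsto_osc hβ hF_cont hi hlim x _
  rw [zero_add, ← hinv, osc_comp_add_right]
  refine HR _ ?_
  rw [PiLp.norm_single, Real.norm_eq_abs, abs_abs]
  exact le_abs_self R

lemma MemVMO.osc_eq_zero_of_le (hβ : ∀ i, 0 < β i) {i : Fin n} (hi : β i ≤ α)
    (hf : MemVMO β α f) (Q : BetaCube n β) : osc β α f Q = 0 := by
  refine le_antisymm (le_of_forall_pos_le_add fun ε hε => ?_) (osc_nonneg β α f Q)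
  obtain ⟨δ, hδ, hclose⟩ := exists_forall_osc_sub_mollify_le (α := α) hf.1 Q hε
  set φ : ContDiffBump (0 : EuclideanSpace ℝ (Fin n)) := ⟨δ / 2, δ, half_pos hδ, half_lt_self hδ⟩
  have hF_cont := (contDiff_mollify φ hf.1).continuous
  calc osc β α f Q = osc β α ((f - mollify φ f) + mollify φ f) Q := by
        rw [sub_add_cancel]
    _ ≤ osc β α (f - mollify φ f) Q + osc β α (mollify φ f) Q :=
        osc_add_le (hf.1.sub hF_cont.locallyIntegrable) hF_cont.locallyIntegrable Q
    _ ≤ 0 + ε := by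
        rw [(hf.memVMO_mollify φ).osc_eq_zero_of_continuous hβ hi hF_cont, add_zero, zero_add]
        exact hclose φ le_rfl

lemma MemVMO.osc_eq_zero_of_add_nonpos (hβ : ∀ i, 0 ≤ β i) (hα : α + ∑ i, β i ≤ 0)
    (hf : MemVMO β α f) (Q : BetaCube n β) : osc β α f Q = 0 := by
  refine le_antisymm (le_of_forall_pos_le_add fun ε hε => ?_) (osc_nonneg β α f Q)
  obtain ⟨hf_loc, -, -, h_large, -⟩ := hf
  obtain ⟨R, -, HR⟩ := h_large (ε / 2) (half_pos hε)
  set P : BetaCube n β := ⟨Q.c, max Q.l R, lt_max_of_lt_left Q.l_pos⟩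
  have hQP : Q.l ≤ P.l := le_max_left _ _
  calc osc β α f Q ≤ 2 * (P.l / Q.l) ^ (α + ∑ i, β i) * osc β α f P :=
        osc_le_of_subset hf_loc (BetaCube.set_subset_set_of_le hβ rfl hQP)
    _ ≤ 2 * 1 * (ε / 2) := by
        have := osc_nonneg β α f P
        gcongr
        · exact Real.rpow_le_one_of_one_le_of_nonpos ((one_le_div Q.l_pos).2 hQP) hα
        · exact HR P (le_max_right _ _)
    _ = 0 + ε := by ring

end Rigidity

theorem vmo_subset_closure_smooth_compactly_supported_general
    (n : ℕ) (hn : 1 ≤ n) (β : Fin n → ℝ) (hβ : ∀ i, 0 < β i) (α : ℝ)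
    (f : EuclideanSpace ℝ (Fin n) → ℂ) (hf : MemVMO β α f) :
    ∀ ε > (0:ℝ), ∃ g : EuclideanSpace ℝ (Fin n) → ℂ,
      ContDiff ℝ (⊤ : ℕ∞) g ∧ HasCompactSupport g ∧
      ∀ Q : BetaCube n β, osc β α (f - g) Q ≤ ε := by
  intro ε hε
  have : Nonempty (Fin n) := Fin.pos_iff_nonempty.1 hn
  have : NeZero (∑ i, β i) :=
    ⟨(Finset.sum_pos (fun i _ => hβ i) Finset.univ_nonempty).ne'⟩
  suffices h : (∀ Q : BetaCube n β, osc β α f Q = 0) ∨ (0 < α + ∑ i, β i ∧ ∀ i, α < β i) by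
    obtain hzero | ⟨hα_pos, hα⟩ := h
    · exact ⟨0, contDiff_const, HasCompactSupport.zero, fun Q => by
        rw [sub_zero, hzero]; exact hε.le⟩
    · exact hf.exists_contDiff_osc_sub_le_of_lt hβ hα_pos hα hε
  obtain hα | hα_pos := le_or_gt (α + ∑ i, β i) 0
  · exact .inl (hf.osc_eq_zero_of_add_nonpos (fun i => (hβ i).le) hα)
  by_cases hα : ∀ i, α < β i
  · exact .inr ⟨hα_pos, hα⟩
  · obtain ⟨i, hi⟩ := not_forall.1 hα
    exact .inl (hf.osc_eq_zero_of_le hβ (not_lt.1 hi))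

/-- **Density of `C_c^∞` in `VMO^{β,α}`.** For `β ∈ (0,∞)^n` and `α ≥ 0`, every
`f ∈ VMO^{β,α}(ℝⁿ)` can be approximated in the `BMO^{β,α}` seminorm by smooth
compactly supported functions. -/
theorem vmo_subset_closure_smooth_compactly_supported
    (n : ℕ) (hn : 1 ≤ n) (β : Fin n → ℝ) (hβ : ∀ i, 0 < β i) (α : ℝ) (hα : 0 ≤ α)
    (f : EuclideanSpace ℝ (Fin n) → ℂ) (hf : MemVMO β α f) :
    ∀ ε > (0:ℝ), ∃ g : EuclideanSpace ℝ (Fin n) → ℂ,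
      ContDiff ℝ (⊤ : ℕ∞) g ∧ HasCompactSupport g ∧
      ∀ Q : BetaCube n β, osc β α (f - g) Q ≤ ε :=
  vmo_subset_closure_smooth_compactly_supported_general n hn β hβ α f hf

end
end

section
/- Let n≥1 and 0<α<1, and take β=(1,…,1) (so β-cubes are ordinary axis-parallel cubes). A locally integrable f:ℝ^n→ℂ with ‖f‖_{BMO^{1,α}}<∞ belongs to VMO^{1,α}(ℝ^n) if and only if for every ε>0 there exists g∈C_c^∞(ℝ^n) with ‖f−g‖_{BMO^{1,α}}≤ε. -/
/-!
By Campanato's argument (telescoping of means over dyadic balls), a function whose mean oscillation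
over balls of radius `r` is `O(r ^ α)` has a precise representative that is `α`-Hölder, with a
constant proportional to the oscillation bound at the scales involved. For a function `f` of
vanishing mean oscillation this makes the Hölder quotient `‖f x - f y‖ / ‖x - y‖ ^ α` arbitrarily
small when `‖x - y‖` is small and, with no restriction on `y`, when `‖x‖` is large.

Let `δ > 0`, let `u` be a mollification of `f` at a scale `r` below which the quotient is at most
`δ`, and let `χ` be a cutoff at a large scale `N`. Then `f - u` has Hölder constant at most `2 δ`:
below scale `r` both terms are controlled, and above it `f - u` is uniformly at most `δ r ^ α`.
Subtracting a constant does not affect oscillations, so `u` may be replaced by `χ (u - u 0)`: where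
`χ` varies, `u - u 0` has size at most `2 δ N ^ α`, which is compensated by the Hölder constant of
`χ`, a multiple of `N ^ (-α)`.

Conversely a compactly supported Lipschitz function has vanishing mean oscillation when
`0 < α < 1`, and this property is stable under approximation in the seminorm. The argument
works for the balls of any finite-dimensional normed space; cubes are the balls of the supremum
norm.
-/

open MeasureTheory

noncomputable section

namespace VMOApprox

open Filter Metric Module Set Topology Function
open scoped Convolution

/-! ### Averages -/

section Average

variable {X E : Type*} [MeasurableSpace X] {ν : Measure X} [IsFiniteMeasure ν] [NeZero ν]
  [NormedAddCommGroup E] [NormedSpace ℝ E] [CompleteSpace E]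

lemma average_le_of_le {f : X → ℝ} {B : ℝ} (hf : Integrable f ν) (h : ∀ᵐ x ∂ν, f x ≤ B) :
    ⨍ x, f x ∂ν ≤ B :=
  (integral_mono_ae hf.to_average (integrable_const B) (Measure.ae_smul_measure h _)).trans_eq
    (average_const ν B)

lemma norm_average_sub_le {f : X → E} (hf : Integrable f ν) (c : E) :
    ‖(⨍ x, f x ∂ν) - c‖ ≤ ⨍ x, ‖f x - c‖ ∂ν := by
  have h : (⨍ x, f x ∂ν) - c = ⨍ x, (f x - c) ∂ν := by
    rw [average, average, integral_sub hf.to_average (integrable_const c)]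
    exact congrArg _ (average_const ν c).symm
  exact h ▸ norm_integral_le_integral_norm _

lemma average_norm_sub_average_le {f : X → E} (hf : Integrable f ν) (c : E) :
    ⨍ x, ‖f x - ⨍ y, f y ∂ν‖ ∂ν ≤ 2 * ⨍ x, ‖f x - c‖ ∂ν := by
  set m := ⨍ y, f y ∂ν
  have hsub (b : E) : Integrable (fun x ↦ ‖f x - b‖) ν := (hf.sub (integrable_const b)).norm
  calc ⨍ x, ‖f x - m‖ ∂ν
      ≤ ⨍ x, (‖f x - c‖ + ‖m - c‖) ∂ν := by
        refine integral_mono (hsub m).to_average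
          ((hsub c).add (integrable_const _)).to_average fun x ↦ ?_
        simpa only [dist_eq_norm] using dist_triangle_right (f x) m c
    _ = (⨍ x, ‖f x - c‖ ∂ν) + ‖m - c‖ := by
        rw [average, average, integral_add (hsub c).to_average (integrable_const _)]
        exact congrArg _ (average_const ν _)
    _ ≤ 2 * ⨍ x, ‖f x - c‖ ∂ν := by linarith [norm_average_sub_le hf c]

end Average

/-! ### Mean oscillation over balls -/

section Ball

variable {X E : Type*} [PseudoMetricSpace X] [MeasurableSpace X] {μ : Measure X}
  [NormedAddCommGroup E] [NormedSpace ℝ E]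

/-- The mean of `f` over the closed ball of centre `x` and radius `r`. For the supremum norm on
`ℝⁿ` these balls are the cubes of side `2 * r`. -/
def ballMean (μ : Measure X) (f : X → E) (x : X) (r : ℝ) : E :=
  ⨍ y in closedBall x r, f y ∂μ

/-- The mean oscillation of `f` over the closed ball of centre `x` and radius `r`. Unlike the
`O^{β,α}` of the statement, it is not normalised by a power of the size of the ball. -/
def meanOsc (μ : Measure X) (f : X → E) (x : X) (r : ℝ) : ℝ :=
  ⨍ y in closedBall x r, ‖f y - ballMean μ f x r‖ ∂μ

/-- Every value `f x` is the limit of the means of `f` over the balls centred at `x`. By Lebesgue's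
differentiation theorem this selects at most one function in each almost-everywhere class. -/
def IsPrecise (μ : Measure X) (f : X → E) : Prop :=
  ∀ x, Tendsto (ballMean μ f x) (𝓝[>] 0) (𝓝 (f x))

lemma meanOsc_nonneg (f : X → E) (x : X) (r : ℝ) : 0 ≤ meanOsc μ f x r :=
  integral_nonneg fun _ ↦ norm_nonneg _

lemma ballMean_congr_ae {f g : X → E} (h : f =ᵐ[μ] g) : ballMean μ f = ballMean μ g := by
  ext x r
  exact average_congr (ae_restrict_of_ae h)

lemma meanOsc_congr_ae {f g : X → E} (h : f =ᵐ[μ] g) : meanOsc μ f = meanOsc μ g := by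
  ext x r
  refine average_congr (ae_restrict_of_ae ?_)
  filter_upwards [h] with y hy
  rw [hy, ballMean_congr_ae h]

lemma neZero_restrict_closedBall [μ.IsOpenPosMeasure] (x : X) {r : ℝ} (hr : 0 < r) :
    NeZero (μ.restrict (closedBall x r)) :=
  ⟨Measure.restrict_eq_zero.not.2 (measure_closedBall_pos μ x hr).ne'⟩

variable [ProperSpace X] [IsLocallyFiniteMeasure μ]

instance isFiniteMeasure_restrict_closedBall (x : X) (r : ℝ) :
    IsFiniteMeasure (μ.restrict (closedBall x r)) :=
  isFiniteMeasure_restrict.2 (isCompact_closedBall x r).measure_lt_top.ne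

omit [NormedSpace ℝ E] in
lemma integrableOn_norm_sub_closedBall {f : X → E} (hf : LocallyIntegrable f μ) (x : X) (r : ℝ)
    (c : E) : IntegrableOn (fun y ↦ ‖f y - c‖) (closedBall x r) μ :=
  ((hf.integrableOn_isCompact (isCompact_closedBall x r)).sub (integrable_const c)).norm

lemma meanOsc_add_le {f g : X → E} (hf : LocallyIntegrable f μ) (hg : LocallyIntegrable g μ)
    (x : X) (r : ℝ) : meanOsc μ (f + g) x r ≤ meanOsc μ f x r + meanOsc μ g x r := by
  have hmean : ballMean μ (f + g) x r = ballMean μ f x r + ballMean μ g x r :=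
    integral_add (hf.integrableOn_isCompact (isCompact_closedBall x r)).to_average
      (hg.integrableOn_isCompact (isCompact_closedBall x r)).to_average
  have hfint := (integrableOn_norm_sub_closedBall hf x r (ballMean μ f x r)).to_average
  have hgint := (integrableOn_norm_sub_closedBall hg x r (ballMean μ g x r)).to_average
  rw [meanOsc, meanOsc, meanOsc, average, average, average, ← integral_add hfint hgint]
  refine integral_mono (integrableOn_norm_sub_closedBall (hf.add hg) x r _).to_average
    (hfint.add hgint) fun y ↦ ?_
  simpa only [hmean, Pi.add_apply, add_sub_add_comm] using norm_add_le _ _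

variable [μ.IsOpenPosMeasure] [CompleteSpace E]

lemma meanOsc_le_two_mul_average {f : X → E} (hf : LocallyIntegrable f μ) (x : X) {r : ℝ}
    (hr : 0 < r) (c : E) :
    meanOsc μ f x r ≤ 2 * ⨍ y in closedBall x r, ‖f y - c‖ ∂μ :=
  have := neZero_restrict_closedBall (μ := μ) x hr
  average_norm_sub_average_le (hf.integrableOn_isCompact (isCompact_closedBall x r)) c

lemma norm_ballMean_sub_le {f : X → E} (hf : LocallyIntegrable f μ) (x : X) {r : ℝ}
    (hr : 0 < r) (c : E) :
    ‖ballMean μ f x r - c‖ ≤ ⨍ y in closedBall x r, ‖f y - c‖ ∂μ :=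
  have := neZero_restrict_closedBall (μ := μ) x hr
  norm_average_sub_le (hf.integrableOn_isCompact (isCompact_closedBall x r)) c

lemma meanOsc_le_of_dist_le [OpensMeasurableSpace X] {f : X → E} (hf : LocallyIntegrable f μ)
    {x : X} {r B : ℝ} (hr : 0 < r)
    (h : ∀ y ∈ closedBall x r, ∀ z ∈ closedBall x r, dist (f y) (f z) ≤ B) :
    meanOsc μ f x r ≤ B := by
  have := neZero_restrict_closedBall (μ := μ) x hr
  have average_le {c : E} (hc : ∀ y ∈ closedBall x r, ‖f y - c‖ ≤ B) :
      ⨍ y in closedBall x r, ‖f y - c‖ ∂μ ≤ B :=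
    average_le_of_le (integrableOn_norm_sub_closedBall hf x r c)
      (ae_restrict_of_forall_mem isClosed_closedBall.measurableSet hc)
  refine average_le fun y hy ↦ ?_
  rw [norm_sub_rev]
  exact (norm_ballMean_sub_le hf x hr _).trans
    (average_le fun z hz ↦ (dist_eq_norm _ _).symm.trans_le (h z hz y hy))

end Ball

section Haar

variable {V E : Type*} [NormedAddCommGroup V] [NormedSpace ℝ V] [FiniteDimensional ℝ V]
  [MeasurableSpace V] [BorelSpace V] {μ : Measure V} [μ.IsAddHaarMeasure]
  [NormedAddCommGroup E] [NormedSpace ℝ E] [CompleteSpace E]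

lemma average_closedBall_le_mul {u : V → ℝ} (hu : ∀ z, 0 ≤ u z) {x y : V} {r s : ℝ} (hr : 0 < r)
    (hus : IntegrableOn u (closedBall y s) μ) (hxy : r + dist x y ≤ s) :
    ⨍ z in closedBall x r, u z ∂μ ≤ (s / r) ^ finrank ℝ V * ⨍ z in closedBall y s, u z ∂μ := by
  have hs : 0 < s := by linarith [dist_nonneg (x := x) (y := y)]
  have hball : 0 < μ.real (ball (0 : V) 1) :=
    ENNReal.toReal_pos (measure_ball_pos μ 0 one_pos).ne' measure_ball_lt_top.ne
  have hmono : ∫ z in closedBall x r, u z ∂μ ≤ ∫ z in closedBall y s, u z ∂μ :=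
    setIntegral_mono_set hus (.of_forall hu)
      (LE.le.eventuallyLE (closedBall_subset_closedBall' hxy))
  rw [setAverage_eq, setAverage_eq, Measure.addHaar_real_closedBall μ x hr.le,
    Measure.addHaar_real_closedBall μ y hs.le, smul_eq_mul, smul_eq_mul, div_pow]
  calc (r ^ finrank ℝ V * μ.real (ball (0 : V) 1))⁻¹ * ∫ z in closedBall x r, u z ∂μ
      ≤ (r ^ finrank ℝ V * μ.real (ball (0 : V) 1))⁻¹ * ∫ z in closedBall y s, u z ∂μ := by
        gcongr
    _ = _ := by field_simp

lemma dist_ballMean_ballMean_le {f : V → E} (hf : LocallyIntegrable f μ) {x y : V} {r s : ℝ}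
    (hr : 0 < r) (hxy : r + dist x y ≤ s) :
    dist (ballMean μ f x r) (ballMean μ f y s) ≤ (s / r) ^ finrank ℝ V * meanOsc μ f y s := by
  rw [dist_eq_norm]
  exact (norm_ballMean_sub_le hf x hr _).trans <| average_closedBall_le_mul
    (fun _ ↦ norm_nonneg _) hr (integrableOn_norm_sub_closedBall hf y s _) hxy

lemma meanOsc_le_mul_meanOsc {f : V → E} (hf : LocallyIntegrable f μ) {x y : V} {r s : ℝ}
    (hr : 0 < r) (hxy : r + dist x y ≤ s) :
    meanOsc μ f x r ≤ 2 * ((s / r) ^ finrank ℝ V * meanOsc μ f y s) :=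
  (meanOsc_le_two_mul_average hf x hr _).trans <| mul_le_mul_of_nonneg_left
    (average_closedBall_le_mul (fun _ ↦ norm_nonneg _) hr
      (integrableOn_norm_sub_closedBall hf y s _) hxy) zero_le_two

end Haar

/-! ### Campanato's theorem -/

section Dyadic

variable {M : Type*} [PseudoMetricSpace M] {m : ℝ → M} {a D r : ℝ}

lemma one_sub_two_rpow_neg_pos (ha : 0 < a) : (0 : ℝ) < 1 - 2 ^ (-a) :=
  sub_pos.2 (Real.rpow_lt_one_of_one_lt_of_neg one_lt_two (neg_lt_zero.2 ha))

lemma dist_le_of_dist_le_of_half_le (ha : 0 < a) (hD : 0 ≤ D)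
    (h : ∀ s t, 0 < s → t / 2 ≤ s → s ≤ t → t ≤ r → dist (m s) (m t) ≤ D * t ^ a)
    {s : ℝ} (hs : 0 < s) (hsr : s ≤ r) : dist (m s) (m r) ≤ D / (1 - 2 ^ (-a)) * r ^ a := by
  have hq := one_sub_two_rpow_neg_pos ha
  set K := D / (1 - 2 ^ (-a))
  have hDK : D ≤ K := le_div_self hD hq (sub_le_self _ (by positivity))
  have hKD : K * 2 ^ (-a) + D = K := by linarith [div_mul_cancel₀ D hq.ne']
  have dyadic (k : ℕ) : ∀ t ≤ r, t / 2 ^ k ≤ s → s ≤ t → dist (m s) (m t) ≤ K * t ^ a := by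
    induction k with
    | zero =>
      intro t htr hts hst
      have ht : 0 < t := hs.trans_le hst
      rw [pow_zero, div_one] at hts
      exact (h s t hs (by linarith) hst htr).trans (by gcongr)
    | succ k ih =>
      intro t htr hts hst
      have ht : 0 < t := hs.trans_le hst
      obtain hhalf | hhalf := le_total (t / 2) s
      · exact (h s t hs hhalf hst htr).trans (by gcongr)
      calc dist (m s) (m t)
          ≤ K * (t / 2) ^ a + D * t ^ a :=
            (dist_triangle _ (m (t / 2)) _).trans <| add_le_add
              (ih (t / 2) (by linarith) (by rwa [div_div, ← pow_succ']) hhalf)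
              (h (t / 2) t (by linarith) le_rfl (by linarith) htr)
        _ = (K * 2 ^ (-a) + D) * t ^ a := by
            rw [Real.div_rpow ht.le zero_le_two, Real.rpow_neg zero_le_two]
            ring
        _ = K * t ^ a := by rw [hKD]
  obtain ⟨k, hk⟩ := pow_unbounded_of_one_lt (r / s) one_lt_two
  refine dyadic k r le_rfl ?_ hsr
  rw [div_le_iff₀ (by positivity), mul_comm]
  exact ((div_lt_iff₀ hs).1 hk).le

lemma exists_tendsto_nhdsGT_zero_of_dist_le [CompleteSpace M] (ha : 0 < a) (hr : 0 < r)
    (h : ∀ s t, 0 < s → s ≤ t → t ≤ r → dist (m s) (m t) ≤ D * t ^ a) :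
    ∃ l, Tendsto m (𝓝[>] 0) (𝓝 l) := by
  refine cauchy_map_iff_exists_tendsto.1 (Metric.cauchy_iff.2 ⟨inferInstance, fun ε hε ↦ ?_⟩)
  have hlim : Tendsto (fun t : ℝ ↦ D * t ^ a) (𝓝[>] 0) (𝓝 0) := by
    have := ((Real.continuousAt_rpow_const 0 a (.inr ha.le)).const_mul D).tendsto
    simp only [Real.zero_rpow ha.ne', mul_zero] at this
    exact this.mono_left nhdsWithin_le_nhds
  obtain ⟨t, ⟨htε, htr⟩, ht⟩ := ((hlim.eventually_lt_const (half_pos hε)).and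
    (eventually_nhdsWithin_of_eventually_nhds (eventually_le_nhds hr))).and
      self_mem_nhdsWithin |>.exists
  refine ⟨m '' Ioc 0 t, image_mem_map (Ioc_mem_nhdsGT ht), ?_⟩
  rintro _ ⟨s, hs, rfl⟩ _ ⟨s', hs', rfl⟩
  linarith [dist_triangle_right (m s) (m s') (m t), h s t hs.1 hs.2 htr, h s' t hs'.1 hs'.2 htr]

end Dyadic

section Haar

variable {V E : Type*} [NormedAddCommGroup V] [NormedSpace ℝ V] [FiniteDimensional ℝ V]
  [MeasurableSpace V] [BorelSpace V] {μ : Measure V} [μ.IsAddHaarMeasure]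
  [NormedAddCommGroup E] [NormedSpace ℝ E] [CompleteSpace E] {f : V → E} {a A r : ℝ} {x y : V}

lemma dist_ballMean_le_of_meanOsc_le (hf : LocallyIntegrable f μ) (ha : 0 < a) (hA : 0 ≤ A)
    (h : ∀ s, 0 < s → s ≤ r → meanOsc μ f x s ≤ A * s ^ a) {s : ℝ} (hs : 0 < s) (hsr : s ≤ r) :
    dist (ballMean μ f x s) (ballMean μ f x r) ≤
      2 ^ finrank ℝ V * A / (1 - 2 ^ (-a)) * r ^ a := by
  refine dist_le_of_dist_le_of_half_le ha (by positivity) (fun s t hs hts hst htr ↦ ?_) hs hsr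
  have ht := hs.trans_le hst
  calc dist (ballMean μ f x s) (ballMean μ f x t)
      ≤ (t / s) ^ finrank ℝ V * meanOsc μ f x t :=
        dist_ballMean_ballMean_le hf hs (by rwa [dist_self, add_zero])
    _ ≤ 2 ^ finrank ℝ V * (A * t ^ a) := by
        gcongr
        · exact meanOsc_nonneg f x t
        · rw [div_le_iff₀ hs]
          linarith
        · exact h t ht htr
    _ = 2 ^ finrank ℝ V * A * t ^ a := by ring

lemma ae_tendsto_ballMean (hf : LocallyIntegrable f μ) :
    ∀ᵐ x ∂μ, Tendsto (ballMean μ f x) (𝓝[>] 0) (𝓝 (f x)) := by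
  filter_upwards [IsUnifLocDoublingMeasure.ae_tendsto_average μ hf 1] with x hx
  refine hx (fun _ ↦ x) id tendsto_id ?_
  filter_upwards [self_mem_nhdsWithin] with r hr
  simpa using le_of_lt hr

lemma exists_isPrecise_ae_eq (hf : LocallyIntegrable f μ) (ha : 0 < a) (hA : 0 ≤ A) (hr : 0 < r)
    (h : ∀ x s, 0 < s → s ≤ r → meanOsc μ f x s ≤ A * s ^ a) :
    ∃ F : V → E, f =ᵐ[μ] F ∧ IsPrecise μ F := by
  have hlim (x : V) : ∃ l, Tendsto (ballMean μ f x) (𝓝[>] 0) (𝓝 l) :=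
    exists_tendsto_nhdsGT_zero_of_dist_le ha hr fun s t hs hst htr ↦
      dist_ballMean_le_of_meanOsc_le hf ha hA (fun u hu hut ↦ h x u hu (hut.trans htr)) hs hst
  choose F hF using hlim
  have hfF : f =ᵐ[μ] F := by
    filter_upwards [ae_tendsto_ballMean hf] with x hx
    exact tendsto_nhds_unique hx (hF x)
  exact ⟨F, hfF, fun x ↦ ballMean_congr_ae hfF ▸ hF x⟩

/-- The constant in Campanato's theorem, in dimension `d` and for the Hölder exponent `a`. The
quotient sums a geometric series over dyadic scales, and the factor `3 * 2 ^ a` stands for three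
comparisons at scale at most twice the distance of the two points. -/
def campanatoConst (d : ℕ) (a : ℝ) : ℝ :=
  3 * 2 ^ a * (2 ^ d / (1 - 2 ^ (-a)))

lemma campanatoConst_pos (d : ℕ) (ha : 0 < a) : 0 < campanatoConst d a := by
  have hq := one_sub_two_rpow_neg_pos ha
  unfold campanatoConst
  positivity

namespace IsPrecise

lemma dist_ballMean_le (hfx : IsPrecise μ f) (hf : LocallyIntegrable f μ) (ha : 0 < a)
    (hA : 0 ≤ A) (hr : 0 < r) (h : ∀ s, 0 < s → s ≤ r → meanOsc μ f x s ≤ A * s ^ a) :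
    dist (f x) (ballMean μ f x r) ≤ 2 ^ finrank ℝ V * A / (1 - 2 ^ (-a)) * r ^ a := by
  refine le_of_tendsto ((hfx x).dist tendsto_const_nhds) ?_
  filter_upwards [Ioc_mem_nhdsGT hr] with s hs
  exact dist_ballMean_le_of_meanOsc_le hf ha hA h hs.1 hs.2

lemma dist_le_campanatoConst_mul (hfx : IsPrecise μ f) (hf : LocallyIntegrable f μ)
    (ha : 0 < a) (hA : 0 ≤ A)
    (hx : ∀ s, 0 < s → s ≤ 2 * dist x y → meanOsc μ f x s ≤ A * s ^ a)
    (hy : ∀ s, 0 < s → s ≤ 2 * dist x y → meanOsc μ f y s ≤ A * s ^ a) :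
    dist (f x) (f y) ≤ campanatoConst (finrank ℝ V) a * A * dist x y ^ a := by
  obtain rfl | hxy := eq_or_ne x y
  · simp [Real.zero_rpow ha.ne']
  set ρ := dist x y
  have hρ : 0 < ρ := dist_pos.2 hxy
  have hq := one_sub_two_rpow_neg_pos ha
  have hDK : 2 ^ finrank ℝ V * A ≤ 2 ^ finrank ℝ V * A / (1 - 2 ^ (-a)) :=
    le_div_self (by positivity) hq (sub_le_self _ (by positivity))
  set K := 2 ^ finrank ℝ V * A / (1 - 2 ^ (-a)) with hK
  have hmid : dist (ballMean μ f x ρ) (ballMean μ f y (2 * ρ)) ≤ K * (2 * ρ) ^ a := by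
    refine (dist_ballMean_ballMean_le hf hρ (two_mul ρ).ge).trans ?_
    rw [mul_div_cancel_right₀ _ hρ.ne']
    calc 2 ^ finrank ℝ V * meanOsc μ f y (2 * ρ)
        ≤ 2 ^ finrank ℝ V * (A * (2 * ρ) ^ a) := by gcongr; exact hy _ (by positivity) le_rfl
      _ ≤ K * (2 * ρ) ^ a := by rw [← mul_assoc]; gcongr
  calc dist (f x) (f y)
      ≤ dist (f x) (ballMean μ f x ρ) + dist (ballMean μ f x ρ) (ballMean μ f y (2 * ρ)) +
          dist (ballMean μ f y (2 * ρ)) (f y) := dist_triangle4 _ _ _ _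
    _ ≤ K * (2 * ρ) ^ a + K * (2 * ρ) ^ a + K * (2 * ρ) ^ a := by
        gcongr
        · refine (hfx.dist_ballMean_le hf ha hA hρ fun s hs hsρ ↦ hx s hs (by linarith)).trans ?_
          gcongr
          linarith
        · rw [dist_comm]
          exact hfx.dist_ballMean_le hf ha hA (by positivity) hy
    _ = campanatoConst (finrank ℝ V) a * A * ρ ^ a := by
        rw [Real.mul_rpow zero_le_two hρ.le, hK, campanatoConst]
        ring

end IsPrecise

end Haar

/-! ### Functions of vanishing mean oscillation -/

section Vanishing

variable {X E : Type*} [PseudoMetricSpace X] [MeasurableSpace X]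
  [NormedAddCommGroup E] [NormedSpace ℝ E]

/-- The analogue of `VMO^{1,α}` for the closed balls of a metric space: `f` is locally integrable
and its mean oscillation is `o(r ^ α)` at small scales, at large scales and far away. A uniform
bound on the seminorm is not part of the definition. -/
structure HasVanishingMeanOsc (μ : Measure X) (α : ℝ) (f : X → E) : Prop where
  locallyIntegrable : LocallyIntegrable f μ
  small : ∀ ε > (0 : ℝ), ∀ᶠ r in 𝓝[>] 0, ∀ x, meanOsc μ f x r ≤ ε * r ^ α
  large : ∀ ε > (0 : ℝ), ∀ᶠ r in atTop, ∀ x, meanOsc μ f x r ≤ ε * r ^ α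
  far : ∀ r > (0 : ℝ), ∀ ε > (0 : ℝ), ∀ᶠ x in Bornology.cobounded X, meanOsc μ f x r ≤ ε * r ^ α

lemma HasVanishingMeanOsc.congr_ae {μ : Measure X} {α : ℝ} {f g : X → E}
    (hf : HasVanishingMeanOsc μ α f) (h : f =ᵐ[μ] g) : HasVanishingMeanOsc μ α g where
  locallyIntegrable := hf.locallyIntegrable.congr h
  small := meanOsc_congr_ae h ▸ hf.small
  large := meanOsc_congr_ae h ▸ hf.large
  far := meanOsc_congr_ae h ▸ hf.far

end Vanishing

section Holder

variable {X M : Type*} [PseudoMetricSpace X] [PseudoMetricSpace M] {f : X → M} {α ε r : ℝ}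

lemma continuous_of_dist_le_rpow (hα : 0 < α) (hr : 0 < r)
    (h : ∀ x y, dist x y ≤ r → dist (f x) (f y) ≤ ε * dist x y ^ α) : Continuous f := by
  refine continuous_iff_continuousAt.2 fun x ↦ tendsto_iff_dist_tendsto_zero.2 ?_
  have hlim : Tendsto (fun y ↦ ε * dist y x ^ α) (𝓝 x) (𝓝 0) := by
    have : Continuous fun y ↦ ε * dist y x ^ α :=
      continuous_const.mul ((continuous_id.dist continuous_const).rpow_const fun _ ↦ .inr hα.le)
    simpa [Real.zero_rpow hα.ne'] using this.tendsto x
  refine squeeze_zero' (.of_forall fun _ ↦ dist_nonneg) ?_ hlim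
  filter_upwards [closedBall_mem_nhds x hr] with y hy using h y x hy

lemma eventually_cobounded_forall_dist_le [ProperSpace X] (hα0 : 0 < α) (hα1 : α ≤ 1) (hε : 0 < ε)
    (hf : Continuous f) {S : Set X} (hS : S ∈ Bornology.cobounded X)
    (h : ∀ x ∈ S, ∀ y ∈ S, dist (f x) (f y) ≤ ε * dist x y ^ α) :
    ∀ᶠ x in Bornology.cobounded X, ∀ y, dist (f x) (f y) ≤ 2 * ε * dist x y ^ α := by
  obtain rfl | ⟨y₀, hy₀⟩ := S.eq_empty_or_nonempty
  · simp [empty_mem_iff_bot.1 hS]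
  obtain ⟨R, hR⟩ := (isBounded_iff_subset_closedBall y₀).1
    (Bornology.isBounded_def.2 ((compl_compl S).symm ▸ hS))
  obtain ⟨D, hD⟩ := (isBounded_iff_subset_closedBall (f y₀)).1
    ((isCompact_closedBall y₀ R).image hf).isBounded
  have hlarge : ∀ᶠ x in Bornology.cobounded X,
      R ^ α + D / ε ≤ (dist x y₀ - R) ^ α ∧ R ≤ dist x y₀ :=
    (((tendsto_rpow_atTop hα0).comp (tendsto_atTop_add_const_right _ (-R)
      (tendsto_dist_right_cobounded_atTop y₀))).eventually_ge_atTop _).and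
      ((tendsto_dist_right_cobounded_atTop y₀).eventually_ge_atTop _)
  filter_upwards [hS, hlarge] with x hxS ⟨hx, hxR⟩ y
  have hxy : 0 ≤ dist x y ^ α := by positivity
  by_cases hyS : y ∈ S
  · nlinarith [h x hxS y hyS]
  have hyR : dist y y₀ ≤ R := hR hyS
  have hyD : dist (f y₀) (f y) ≤ D := by
    rw [dist_comm]
    exact hD (mem_image_of_mem f hyR)
  have hR0 : 0 ≤ R := dist_nonneg.trans hyR
  have hle : R ^ α + D / ε ≤ dist x y ^ α :=
    hx.trans (Real.rpow_le_rpow (sub_nonneg.2 hxR)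
      (by linarith [dist_triangle x y y₀]) hα0.le)
  calc dist (f x) (f y)
      ≤ dist (f x) (f y₀) + dist (f y₀) (f y) := dist_triangle _ _ _
    _ ≤ ε * (dist x y + R) ^ α + D := by
        refine add_le_add ((h x hxS y₀ hy₀).trans ?_) hyD
        gcongr
        exact (dist_triangle x y y₀).trans (by gcongr)
    _ ≤ ε * (dist x y ^ α + R ^ α) + D := by
        gcongr
        exact Real.rpow_add_le_add_rpow dist_nonneg hR0 hα0.le hα1
    _ = ε * dist x y ^ α + ε * (R ^ α + D / ε) := by field_simp; ring
    _ ≤ ε * dist x y ^ α + ε * dist x y ^ α := by gcongr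
    _ = 2 * ε * dist x y ^ α := by ring

end Holder

section Haar

variable {V E : Type*} [NormedAddCommGroup V] [NormedSpace ℝ V] [FiniteDimensional ℝ V]
  [MeasurableSpace V] [BorelSpace V] {μ : Measure V} [μ.IsAddHaarMeasure]
  [NormedAddCommGroup E] [NormedSpace ℝ E] [CompleteSpace E] {f : V → E} {α ε : ℝ}

namespace HasVanishingMeanOsc

lemma exists_isPrecise_ae_eq (hf : HasVanishingMeanOsc μ α f) (hα : 0 < α) :
    ∃ F : V → E, f =ᵐ[μ] F ∧ IsPrecise μ F := by
  obtain ⟨r, hr, h⟩ := (nhdsGT_basis_Ioc (0 : ℝ)).eventually_iff.1 (hf.small 1 one_pos)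
  exact VMOApprox.exists_isPrecise_ae_eq hf.locallyIntegrable hα zero_le_one hr
    fun x s hs hsr ↦ h ⟨hs, hsr⟩ x

lemma exists_forall_dist_le (hf : HasVanishingMeanOsc μ α f) (hfx : IsPrecise μ f) (hα : 0 < α)
    (hε : 0 < ε) :
    ∃ r > 0, ∀ x y, dist x y ≤ r → dist (f x) (f y) ≤ ε * dist x y ^ α := by
  have hC := campanatoConst_pos (finrank ℝ V) hα
  obtain ⟨r, hr, h⟩ := (nhdsGT_basis_Ioc (0 : ℝ)).eventually_iff.1
    (hf.small (ε / campanatoConst (finrank ℝ V) α) (by positivity))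
  refine ⟨r / 2, half_pos hr, fun x y hxy ↦ ?_⟩
  have hbound (z : V) : ∀ s, 0 < s → s ≤ 2 * dist x y → meanOsc μ f z s ≤ _ :=
    fun s hs hsxy ↦ h ⟨hs, by linarith⟩ z
  simpa only [mul_div_cancel₀ _ hC.ne'] using hfx.dist_le_campanatoConst_mul hf.locallyIntegrable hα
    (by positivity) (hbound x) (hbound y)

lemma continuous (hf : HasVanishingMeanOsc μ α f) (hfx : IsPrecise μ f) (hα : 0 < α) :
    Continuous f := by
  obtain ⟨r, hr, h⟩ := hf.exists_forall_dist_le hfx hα one_pos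
  exact continuous_of_dist_le_rpow hα hr h

lemma eventually_forall_meanOsc_le (hf : HasVanishingMeanOsc μ α f) (hα : 0 < α) (hε : 0 < ε) :
    ∀ᶠ x in Bornology.cobounded V, ∀ r > 0, meanOsc μ f x r ≤ ε * r ^ α := by
  obtain ⟨ρ, hρ, hsmall⟩ := (nhdsGT_basis_Ioc (0 : ℝ)).eventually_iff.1 (hf.small ε hε)
  obtain ⟨R, hR, hlarge⟩ := (atTop_basis' ρ).eventually_iff.1 (hf.large ε hε)
  have hR0 : 0 < R := lt_of_lt_of_le hρ hR
  filter_upwards [hf.far R hR0 (ε * ρ ^ α / (2 * (R / ρ) ^ finrank ℝ V * R ^ α)) (by positivity)]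
    with x hx r hr
  obtain hrρ | hrρ := le_total r ρ
  · exact hsmall ⟨hr, hrρ⟩ x
  obtain hrR | hrR := le_total R r
  · exact hlarge hrR x
  calc meanOsc μ f x r
      ≤ 2 * ((R / r) ^ finrank ℝ V * meanOsc μ f x R) :=
        meanOsc_le_mul_meanOsc hf.locallyIntegrable hr (by rwa [dist_self, add_zero])
    _ ≤ 2 * ((R / ρ) ^ finrank ℝ V *
          (ε * ρ ^ α / (2 * (R / ρ) ^ finrank ℝ V * R ^ α) * R ^ α)) := by
        gcongr
        exact meanOsc_nonneg f x R
    _ = ε * ρ ^ α := by field_simp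
    _ ≤ ε * r ^ α := by gcongr

lemma eventually_forall_dist_le (hf : HasVanishingMeanOsc μ α f) (hfx : IsPrecise μ f)
    (hα0 : 0 < α) (hα1 : α ≤ 1) (hε : 0 < ε) :
    ∀ᶠ x in Bornology.cobounded V, ∀ y, dist (f x) (f y) ≤ ε * dist x y ^ α := by
  have hC := campanatoConst_pos (finrank ℝ V) hα0
  have hfar := hf.eventually_forall_meanOsc_le hα0 (half_pos (div_pos hε hC))
  have := eventually_cobounded_forall_dist_le hα0 hα1 (half_pos hε) (hf.continuous hfx hα0) hfar
    fun x hx y hy ↦ (hfx.dist_le_campanatoConst_mul hf.locallyIntegrable hα0 (by positivity)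
      (fun s hs _ ↦ hx s hs) (fun s hs _ ↦ hy s hs)).trans_eq (by field_simp)
  simpa only [mul_div_cancel₀ _ (two_ne_zero' ℝ)] using this

end HasVanishingMeanOsc

/-! ### Mollification -/

section Mollification

variable {f : V → E} {α δ : ℝ} {φ : ContDiffBump (0 : V)} {x y : V}

open ContinuousLinearMap (lsmul)

omit [CompleteSpace E] in
lemma dist_normed_convolution_normed_convolution_le (hf : Continuous f) {B : ℝ}
    (h : ∀ t ∈ ball (0 : V) φ.rOut, dist (f (x - t)) (f (y - t)) ≤ B) :
    dist ((φ.normed μ ⋆[lsmul ℝ ℝ, μ] f) x) ((φ.normed μ ⋆[lsmul ℝ ℝ, μ] f) y) ≤ B := by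
  have hint (z : V) : Integrable (fun t ↦ φ.normed μ t • f (z - t)) μ :=
    φ.hasCompactSupport_normed.convolutionExists_left (lsmul ℝ ℝ) φ.continuous_normed
      hf.locallyIntegrable z
  calc dist ((φ.normed μ ⋆[lsmul ℝ ℝ, μ] f) x) ((φ.normed μ ⋆[lsmul ℝ ℝ, μ] f) y)
      = ‖∫ t, φ.normed μ t • (f (x - t) - f (y - t)) ∂μ‖ := by
        simp only [dist_eq_norm, convolution_lsmul, smul_sub]
        rw [integral_sub (hint x) (hint y)]
    _ ≤ ∫ t, φ.normed μ t * B ∂μ := by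
        refine norm_integral_le_of_norm_le (φ.integrable_normed.mul_const B) (.of_forall fun t ↦ ?_)
        rw [norm_smul, Real.norm_of_nonneg (φ.nonneg_normed t), ← dist_eq_norm]
        by_cases ht : t ∈ support (φ.normed μ)
        · rw [φ.support_normed_eq] at ht
          exact mul_le_mul_of_nonneg_left (h t ht) (φ.nonneg_normed t)
        · simp [notMem_support.1 ht]
    _ = B := by rw [integral_mul_const, φ.integral_normed, one_mul]

lemma dist_sub_normed_convolution_le (hf : Continuous f) (hα : 0 ≤ α) (hδ : 0 ≤ δ)
    (h : ∀ x y, dist x y ≤ φ.rOut → dist (f x) (f y) ≤ δ * dist x y ^ α) (x y : V) :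
    dist ((f - (φ.normed μ ⋆[lsmul ℝ ℝ, μ] f)) x) ((f - (φ.normed μ ⋆[lsmul ℝ ℝ, μ] f)) y) ≤
      2 * δ * dist x y ^ α := by
  set u := φ.normed μ ⋆[lsmul ℝ ℝ, μ] f
  rw [Pi.sub_apply, Pi.sub_apply]
  obtain hxy | hxy := le_total (dist x y) φ.rOut
  · have hu : dist (u x) (u y) ≤ δ * dist x y ^ α :=
      dist_normed_convolution_normed_convolution_le hf fun t _ ↦ by
        simpa only [dist_sub_right] using h (x - t) (y - t) (by rwa [dist_sub_right])
    linarith [dist_sub_sub_le (f x) (u x) (f y) (u y), h x y hxy]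
  · have hu (z : V) : ‖f z - u z‖ ≤ δ * dist x y ^ α := by
      rw [← dist_eq_norm, dist_comm]
      refine φ.dist_normed_convolution_le hf.aestronglyMeasurable fun z' hz' ↦
        (h z' z (mem_ball.1 hz').le).trans ?_
      gcongr
      exact (mem_ball.1 hz').le.trans hxy
    linarith [dist_le_norm_add_norm (f x - u x) (f y - u y), hu x, hu y]

omit [CompleteSpace E] in
lemma eventually_forall_dist_normed_convolution_le (hf : Continuous f)
    (h : ∀ᶠ x in Bornology.cobounded V, ∀ y, dist (f x) (f y) ≤ δ * dist x y ^ α) :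
    ∀ᶠ x in Bornology.cobounded V, ∀ y, dist ((φ.normed μ ⋆[lsmul ℝ ℝ, μ] f) x)
      ((φ.normed μ ⋆[lsmul ℝ ℝ, μ] f) y) ≤ δ * dist x y ^ α := by
  obtain ⟨N, -, hN⟩ := hasBasis_cobounded_norm.eventually_iff.1 h
  filter_upwards [eventually_cobounded_le_norm (N + φ.rOut)] with x hx y
  refine dist_normed_convolution_normed_convolution_le hf fun t ht ↦ ?_
  have hxt : N ≤ ‖x - t‖ := by linarith [norm_sub_norm_le x t, mem_ball_zero_iff.1 ht]
  simpa only [dist_sub_right] using hN hxt (y - t)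

end Mollification

end Haar

/-! ### Truncation -/

section Truncation

variable {V E : Type*} [NormedAddCommGroup V] [NormedSpace ℝ V] [FiniteDimensional ℝ V]
  [NormedAddCommGroup E] [NormedSpace ℝ E] {u : V → E} {α ε N : ℝ} {x : V}

/-- A smooth cutoff at scale `N > 0`: it equals `1` for `‖x‖ ≤ N` and `0` for `2 * N ≤ ‖x‖`. -/
def cutoff (N : ℝ) (x : V) : ℝ :=
  (⟨1, 2, one_pos, one_lt_two⟩ : ContDiffBump (0 : V)) (N⁻¹ • x)

lemma contDiff_cutoff (N : ℝ) : ContDiff ℝ (⊤ : ℕ∞) (cutoff N : V → ℝ) :=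
  (ContDiffBump.contDiff _).comp (contDiff_const_smul _)

lemma cutoff_mem_Icc (N : ℝ) (x : V) : cutoff N x ∈ Icc 0 1 :=
  ⟨ContDiffBump.nonneg _, ContDiffBump.le_one _⟩

lemma cutoff_eq_one (hN : 0 < N) (hx : ‖x‖ ≤ N) : cutoff N x = 1 := by
  refine ContDiffBump.one_of_mem_closedBall _ (mem_closedBall_zero_iff.2 ?_)
  rwa [norm_smul, norm_inv, Real.norm_of_nonneg hN.le, inv_mul_le_one₀ hN]

lemma cutoff_eq_zero (hN : 0 < N) (hx : 2 * N ≤ ‖x‖) : cutoff N x = 0 := by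
  refine ContDiffBump.zero_of_le_dist _ ?_
  rwa [dist_zero_right, norm_smul, norm_inv, Real.norm_of_nonneg hN.le, inv_mul_eq_div,
    le_div_iff₀ hN]

lemma hasCompactSupport_cutoff (hN : 0 < N) : HasCompactSupport (cutoff N : V → ℝ) :=
  .intro (isCompact_closedBall 0 (2 * N)) fun _ hx ↦
    cutoff_eq_zero hN (le_of_not_ge (mem_closedBall_zero_iff.not.1 hx))

variable (V) in
lemma exists_forall_abs_cutoff_sub_le (hα0 : 0 ≤ α) (hα1 : α ≤ 1) :
    ∃ L ≥ 0, ∀ N > 0, ∀ x y : V, N ^ α * |cutoff N x - cutoff N y| ≤ L * dist x y ^ α := by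
  let b : ContDiffBump (0 : V) := ⟨1, 2, one_pos, one_lt_two⟩
  obtain ⟨K, hK⟩ := (b.contDiff (n := 1)).lipschitzWith_of_hasCompactSupport b.hasCompactSupport
    one_ne_zero
  have hb (x y : V) : |b x - b y| ≤ (K + 1) * dist x y ^ α := by
    have hpow : 0 ≤ dist x y ^ α := by positivity
    obtain hxy | hxy := le_total (dist x y) 1
    · calc |b x - b y| ≤ K * dist x y := hK.dist_le_mul x y
        _ ≤ K * dist x y ^ α := by gcongr; exact Real.self_le_rpow_of_le_one dist_nonneg hxy hα1
        _ ≤ (K + 1) * dist x y ^ α := by linarith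
    · calc |b x - b y| ≤ 1 := abs_sub_le_iff.2
            ⟨by linarith [b.nonneg (x := y), b.le_one (x := x)],
              by linarith [b.nonneg (x := x), b.le_one (x := y)]⟩
        _ ≤ dist x y ^ α := Real.one_le_rpow hxy hα0
        _ ≤ (K + 1) * dist x y ^ α := by nlinarith [K.coe_nonneg]
  refine ⟨K + 1, by positivity, fun N hN x y ↦ ?_⟩
  calc N ^ α * |cutoff N x - cutoff N y|
      ≤ N ^ α * ((K + 1) * dist (N⁻¹ • x) (N⁻¹ • y) ^ α) := by gcongr; exact hb _ _
    _ = (K + 1) * dist x y ^ α := by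
        rw [dist_smul₀, norm_inv, Real.norm_of_nonneg hN.le, mul_left_comm,
          ← Real.mul_rpow hN.le (by positivity), mul_inv_cancel_left₀ hN.ne']

omit [NormedSpace ℝ E] in
lemma eventually_forall_dist_apply_zero_le (hu : Continuous u) (hα0 : 0 < α) (hα1 : α ≤ 1)
    (hε : 0 < ε) (h : ∀ᶠ x in Bornology.cobounded V, ∀ y, dist (u x) (u y) ≤ ε * dist x y ^ α) :
    ∀ᶠ N in atTop, ∀ y, ‖y‖ ≤ 2 * N → dist (u y) (u 0) ≤ 2 * ε * N ^ α := by
  obtain ⟨N₀, -, hN₀⟩ := hasBasis_cobounded_norm.eventually_iff.1 h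
  obtain ⟨D, hD⟩ := (isBounded_iff_subset_closedBall (u 0)).1
    ((isCompact_closedBall 0 N₀).image hu).isBounded
  filter_upwards [(tendsto_rpow_atTop hα0).eventually_ge_atTop (D / (2 * ε)),
    eventually_ge_atTop 0] with N hND hN0 y hy
  obtain hyN | hyN := le_total ‖y‖ N₀
  · rw [div_le_iff₀' (by positivity)] at hND
    exact (hD (mem_image_of_mem u (mem_closedBall_zero_iff.2 hyN))).trans hND
  · calc dist (u y) (u 0) ≤ ε * dist y 0 ^ α := hN₀ hyN 0
      _ ≤ ε * (2 * N) ^ α := by rw [dist_zero_right]; gcongr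
      _ ≤ ε * (2 * N ^ α) := by
          rw [Real.mul_rpow zero_le_two hN0]
          gcongr
          exact Real.rpow_le_self_of_one_le one_le_two hα1
      _ = 2 * ε * N ^ α := by ring

lemma dist_sub_cutoff_smul_le {L : ℝ} (hN : 0 < N) (hε : 0 ≤ ε)
    (hL : ∀ x y : V, N ^ α * |cutoff N x - cutoff N y| ≤ L * dist x y ^ α)
    (hfar : ∀ x, N ≤ ‖x‖ → ∀ y, dist (u x) (u y) ≤ ε * dist x y ^ α) {c : E}
    (hnear : ∀ y, ‖y‖ ≤ 2 * N → dist (u y) c ≤ 2 * ε * N ^ α) (x y : V) :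
    dist (u x - cutoff N x • (u x - c)) (u y - cutoff N y • (u y - c)) ≤
      (1 + 2 * L) * ε * dist x y ^ α := by
  -- With this ordering both cutoffs vanish as soon as `2 * N ≤ ‖y‖`.
  wlog hyx : ‖y‖ ≤ ‖x‖ generalizing x y
  · simpa only [dist_comm] using this y x (le_of_not_ge hyx)
  have hLxy : 0 ≤ L * dist x y ^ α := le_trans (by positivity) (hL x y)
  have hsplit : (u x - cutoff N x • (u x - c)) - (u y - cutoff N y • (u y - c)) =
      (1 - cutoff N x) • (u x - u y) - (cutoff N x - cutoff N y) • (u y - c) := by module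
  have hfst : ‖(1 - cutoff N x) • (u x - u y)‖ ≤ ε * dist x y ^ α := by
    have hχ := cutoff_mem_Icc N x
    rw [norm_smul, Real.norm_of_nonneg (sub_nonneg.2 hχ.2), ← dist_eq_norm]
    obtain hx | hx := le_total ‖x‖ N
    · rw [cutoff_eq_one hN hx, sub_self, zero_mul]
      positivity
    · exact (mul_le_of_le_one_left dist_nonneg (sub_le_self _ hχ.1)).trans (hfar x hx y)
  have hsnd : ‖(cutoff N x - cutoff N y) • (u y - c)‖ ≤ 2 * ε * (L * dist x y ^ α) := by
    rw [norm_smul, Real.norm_eq_abs, ← dist_eq_norm]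
    obtain hy | hy := le_total ‖y‖ (2 * N)
    · calc |cutoff N x - cutoff N y| * dist (u y) c
          ≤ |cutoff N x - cutoff N y| * (2 * ε * N ^ α) := by gcongr; exact hnear y hy
        _ = 2 * ε * (N ^ α * |cutoff N x - cutoff N y|) := by ring
        _ ≤ 2 * ε * (L * dist x y ^ α) := mul_le_mul_of_nonneg_left (hL x y) (by positivity)
    · rw [cutoff_eq_zero hN hy, cutoff_eq_zero hN (hy.trans hyx), sub_self, abs_zero, zero_mul]
      positivity
  rw [dist_eq_norm, hsplit]
  linarith [norm_sub_le ((1 - cutoff N x) • (u x - u y)) ((cutoff N x - cutoff N y) • (u y - c))]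

end Truncation

/-! ### Approximation -/

section Closure

variable {X E : Type*} [PseudoMetricSpace X] [ProperSpace X] [MeasurableSpace X]
  {μ : Measure X} [IsLocallyFiniteMeasure μ] [NormedAddCommGroup E] [NormedSpace ℝ E]
  {f g : X → E} {α : ℝ}

lemma hasVanishingMeanOsc_of_forall_exists_meanOsc_sub_le (hf : LocallyIntegrable f μ)
    (h : ∀ ε > (0 : ℝ), ∃ g : X → E, HasVanishingMeanOsc μ α g ∧
      ∀ x r, 0 < r → meanOsc μ (f - g) x r ≤ ε * r ^ α) :
    HasVanishingMeanOsc μ α f := by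
  have transfer (ε : ℝ) (hε : 0 < ε) : ∃ g : X → E, HasVanishingMeanOsc μ α g ∧ ∀ x r, 0 < r →
      meanOsc μ g x r ≤ ε / 2 * r ^ α → meanOsc μ f x r ≤ ε * r ^ α := by
    obtain ⟨g, hg, hfg⟩ := h (ε / 2) (half_pos hε)
    refine ⟨g, hg, fun x r hr hgr ↦ ?_⟩
    have hadd := meanOsc_add_le (hf.sub hg.locallyIntegrable) hg.locallyIntegrable x r
    rw [sub_add_cancel] at hadd
    linarith [hfg x r hr]
  refine ⟨hf, fun ε hε ↦ ?_, fun ε hε ↦ ?_, fun r hr ε hε ↦ ?_⟩ <;>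
    obtain ⟨g, hg, hfg⟩ := transfer ε hε
  · filter_upwards [hg.small (ε / 2) (half_pos hε), self_mem_nhdsWithin] with r hgr hr x
    exact hfg x r hr (hgr x)
  · filter_upwards [hg.large (ε / 2) (half_pos hε), eventually_gt_atTop 0] with r hgr hr x
    exact hfg x r hr (hgr x)
  · filter_upwards [hg.far r hr (ε / 2) (half_pos hε)] with x hgx
    exact hfg x r hr hgx

lemma hasVanishingMeanOsc_of_lipschitzWith [OpensMeasurableSpace X] [μ.IsOpenPosMeasure]
    [CompleteSpace E] (hα0 : 0 < α) (hα1 : α < 1) {K : NNReal} (hgK : LipschitzWith K g)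
    (hg : HasCompactSupport g) : HasVanishingMeanOsc μ α g where
  locallyIntegrable := hgK.continuous.locallyIntegrable
  small ε hε := by
    have hlim : Tendsto (fun r : ℝ ↦ 2 * K * r ^ (1 - α)) (𝓝[>] 0) (𝓝 0) := by
      have hcont : Continuous fun r : ℝ ↦ 2 * K * r ^ (1 - α) :=
        continuous_const.mul (Real.continuous_rpow_const (sub_nonneg.2 hα1.le))
      simpa [Real.zero_rpow (sub_pos.2 hα1).ne'] using
        (hcont.tendsto 0).mono_left nhdsWithin_le_nhds
    filter_upwards [hlim.eventually_le_const hε, self_mem_nhdsWithin] with r hr hr0 x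
    refine meanOsc_le_of_dist_le hgK.continuous.locallyIntegrable hr0 fun y hy z hz ↦ ?_
    calc dist (g y) (g z) ≤ K * dist y z := hgK.dist_le_mul y z
      _ ≤ K * (r + r) := by gcongr; exact dist_triangle_right y z x |>.trans (add_le_add hy hz)
      _ = 2 * K * r ^ (1 - α) * r ^ α := by
          rw [mul_assoc _ (r ^ _), ← Real.rpow_add hr0, sub_add_cancel, Real.rpow_one]
          ring
      _ ≤ ε * r ^ α := by have := Real.rpow_nonneg (le_of_lt hr0) α; gcongr
  large ε hε := by
    obtain ⟨C, hC⟩ := hg.exists_bound_of_continuous hgK.continuous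
    filter_upwards [((tendsto_rpow_atTop hα0).const_mul_atTop hε).eventually_ge_atTop (C + C),
      eventually_gt_atTop 0] with r hr hr0 x
    exact meanOsc_le_of_dist_le hgK.continuous.locallyIntegrable hr0 fun y _ z _ ↦
      (dist_le_norm_add_norm _ _).trans ((add_le_add (hC y) (hC z)).trans hr)
  far r hr ε hε := by
    filter_upwards [hg.isCompact.isBounded.cthickening (δ := r)] with x hx
    have hzero : ∀ y ∈ closedBall x r, g y = 0 := fun y hy ↦ image_eq_zero_of_notMem_tsupport
      fun hyg ↦ hx (mem_cthickening_of_dist_le x y r _ hyg (mem_closedBall'.1 hy))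
    refine meanOsc_le_of_dist_le hgK.continuous.locallyIntegrable hr fun y hy z hz ↦ ?_
    rw [hzero y hy, hzero z hz, dist_self]
    positivity

end Closure

section Haar

variable {V E : Type*} [NormedAddCommGroup V] [NormedSpace ℝ V] [FiniteDimensional ℝ V]
  [MeasurableSpace V] [BorelSpace V] {μ : Measure V} [μ.IsAddHaarMeasure]
  [NormedAddCommGroup E] [NormedSpace ℝ E] [CompleteSpace E] {f : V → E} {α ε : ℝ}

open ContinuousLinearMap (lsmul) in
lemma HasVanishingMeanOsc.exists_contDiff_hasCompactSupport_dist_le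
    (hf : HasVanishingMeanOsc μ α f) (hfx : IsPrecise μ f) (hα0 : 0 < α) (hα1 : α ≤ 1)
    (hε : 0 < ε) :
    ∃ g : V → E, ContDiff ℝ (⊤ : ℕ∞) g ∧ HasCompactSupport g ∧
      ∀ x y, dist ((f - g) x) ((f - g) y) ≤ ε * dist x y ^ α := by
  obtain ⟨L, hL0, hL⟩ := exists_forall_abs_cutoff_sub_le V hα0.le hα1
  set δ := ε / (3 + 2 * L)
  have hδ0 : 0 < δ := by positivity
  have hcont := hf.continuous hfx hα0
  obtain ⟨r, hr, hsmall⟩ := hf.exists_forall_dist_le hfx hα0 hδ0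
  let φ : ContDiffBump (0 : V) := ⟨r / 2, r, half_pos hr, half_lt_self hr⟩
  set u := φ.normed μ ⋆[lsmul ℝ ℝ, μ] f
  have hu : ContDiff ℝ (⊤ : ℕ∞) u :=
    φ.hasCompactSupport_normed.contDiff_convolution_left _ φ.contDiff_normed
      hcont.locallyIntegrable
  have hfar := eventually_forall_dist_normed_convolution_le (μ := μ) (φ := φ) hcont
    (hf.eventually_forall_dist_le hfx hα0 hα1 hδ0)
  obtain ⟨N₀, -, hN₀⟩ := hasBasis_cobounded_norm.eventually_iff.1 hfar
  obtain ⟨N, ⟨hN, hnear⟩, hN0⟩ := ((eventually_ge_atTop N₀).and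
    (eventually_forall_dist_apply_zero_le hu.continuous hα0 hα1 hδ0 hfar)).and
      (eventually_gt_atTop 0) |>.exists
  refine ⟨fun x ↦ cutoff N x • (u x - u 0), (contDiff_cutoff N).smul (hu.sub contDiff_const),
    (hasCompactSupport_cutoff hN0).smul_right, fun x y ↦ ?_⟩
  have htrunc := dist_sub_cutoff_smul_le hN0 hδ0.le (hL N hN0)
    (fun x hx ↦ hN₀ (hN.trans hx)) hnear x y
  have hmoll := dist_sub_normed_convolution_le (μ := μ) (φ := φ) hcont hα0.le hδ0.le hsmall x y
  calc dist (f x - cutoff N x • (u x - u 0)) (f y - cutoff N y • (u y - u 0))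
      ≤ dist ((f - u) x) ((f - u) y) + dist (u x - cutoff N x • (u x - u 0))
          (u y - cutoff N y • (u y - u 0)) := by
        simpa only [Pi.sub_apply, sub_add_sub_cancel] using
          dist_add_add_le ((f - u) x) (u x - cutoff N x • (u x - u 0)) ((f - u) y)
            (u y - cutoff N y • (u y - u 0))
    _ ≤ (3 + 2 * L) * δ * dist x y ^ α := by linarith
    _ = ε * dist x y ^ α := by rw [mul_div_cancel₀ _ (by positivity)]

lemma HasVanishingMeanOsc.exists_contDiff_hasCompactSupport_meanOsc_le
    (hf : HasVanishingMeanOsc μ α f) (hα0 : 0 < α) (hα1 : α ≤ 1) (hε : 0 < ε) :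
    ∃ g : V → E, ContDiff ℝ (⊤ : ℕ∞) g ∧ HasCompactSupport g ∧
      ∀ x r, 0 < r → meanOsc μ (f - g) x r ≤ ε * r ^ α := by
  obtain ⟨F, hfF, hF⟩ := hf.exists_isPrecise_ae_eq hα0
  obtain ⟨g, hg, hgc, hFg⟩ := (hf.congr_ae hfF).exists_contDiff_hasCompactSupport_dist_le hF hα0
    hα1 (ε := ε / 2 ^ α) (by positivity)
  refine ⟨g, hg, hgc, fun x r hr ↦ ?_⟩
  rw [meanOsc_congr_ae (hfF.sub (ae_eq_refl g))]
  refine meanOsc_le_of_dist_le (((hf.congr_ae hfF).locallyIntegrable).sub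
    hg.continuous.locallyIntegrable) hr fun y hy z hz ↦ ?_
  calc dist ((F - g) y) ((F - g) z) ≤ ε / 2 ^ α * dist y z ^ α := hFg y z
    _ ≤ ε / 2 ^ α * (2 * r) ^ α := by
        gcongr
        linarith [dist_triangle_right y z x, mem_closedBall.1 hy, mem_closedBall.1 hz]
    _ = ε * r ^ α := by
        rw [Real.mul_rpow zero_le_two hr.le]
        field_simp

end Haar

/-! ### Cubes as balls of the supremum norm -/

section Cubes

variable {n : ℕ}

lemma toLp_preimage_betaCube (Q : BetaCube n fun _ ↦ 1) :
    WithLp.toLp 2 ⁻¹' Q.set = closedBall (WithLp.ofLp Q.c) (Q.l / 2) := by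
  ext z
  simp [BetaCube.set, dist_pi_le_iff (half_pos Q.l_pos).le, Real.dist_eq]

lemma setAverage_betaCube {E : Type*} [NormedAddCommGroup E] [NormedSpace ℝ E]
    (Q : BetaCube n fun _ ↦ 1) (f : EuclideanSpace ℝ (Fin n) → E) :
    ⨍ x in Q.set, f x = ⨍ z in closedBall (WithLp.ofLp Q.c) (Q.l / 2), f (WithLp.toLp 2 z) := by
  have hp := PiLp.volume_preserving_toLp (Fin n)
  have hemb : MeasurableEmbedding (WithLp.toLp 2 : (Fin n → ℝ) → EuclideanSpace ℝ (Fin n)) :=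
    (MeasurableEquiv.toLp 2 (Fin n → ℝ)).measurableEmbedding
  rw [setAverage_eq, setAverage_eq, ← toLp_preimage_betaCube, hp.setIntegral_preimage_emb hemb,
    measureReal_def, measureReal_def, hp.measure_preimage_emb hemb]

lemma osc_one_le_iff (hn : n ≠ 0) {α ε : ℝ} {f : EuclideanSpace ℝ (Fin n) → ℂ}
    (Q : BetaCube n fun _ ↦ 1) :
    osc (fun _ ↦ 1) α f Q ≤ ε ↔
      meanOsc volume (f ∘ WithLp.toLp 2) (WithLp.ofLp Q.c) (Q.l / 2) ≤
        2 ^ α * ε * (Q.l / 2) ^ α := by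
  have hweight : (Q.l ^ (∑ _i : Fin n, (1 : ℝ))) ^ (-(α / ∑ _i : Fin n, (1 : ℝ))) =
      (Q.l ^ α)⁻¹ := by
    rw [← Real.rpow_mul Q.l_pos.le, ← Real.rpow_neg Q.l_pos.le]
    congr 1
    simp only [Finset.sum_const, Finset.card_univ, Fintype.card_fin, nsmul_eq_mul, mul_one]
    field_simp
  have hscale : 2 ^ α * ε * (Q.l / 2) ^ α = Q.l ^ α * ε := by
    rw [Real.div_rpow Q.l_pos.le zero_le_two]
    field_simp
  rw [osc, cubeAvg, hweight, setAverage_betaCube, setAverage_betaCube, hscale,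
    inv_mul_le_iff₀ (Real.rpow_pos_of_pos Q.l_pos α)]
  rfl

lemma forall_betaCube_iff {p : (Fin n → ℝ) → ℝ → Prop} :
    (∀ Q : BetaCube n fun _ ↦ 1, p (WithLp.ofLp Q.c) (Q.l / 2)) ↔ ∀ x r, 0 < r → p x r := by
  refine ⟨fun h x r hr ↦ ?_, fun h Q ↦ h _ _ (half_pos Q.l_pos)⟩
  simpa using h ⟨WithLp.toLp 2 x, 2 * r, by positivity⟩

lemma locallyIntegrable_comp_toLp_iff {E : Type*} [NormedAddCommGroup E]
    {f : EuclideanSpace ℝ (Fin n) → E} :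
    LocallyIntegrable (f ∘ WithLp.toLp 2) volume ↔ LocallyIntegrable f volume := by
  rw [← (PiLp.volume_preserving_toLp (Fin n)).map_eq]
  exact (locallyIntegrable_map_homeomorph (PiLp.homeomorph 2 fun _ : Fin n ↦ ℝ).symm).symm

lemma forall_pos_mul_iff {c : ℝ} (hc : 0 < c) {p : ℝ → Prop} :
    (∀ ε > 0, p (c * ε)) ↔ ∀ ε > 0, p ε :=
  ⟨fun h ε hε ↦ by simpa only [mul_div_cancel₀ _ hc.ne'] using h (ε / c) (div_pos hε hc),
    fun h ε hε ↦ h _ (mul_pos hc hε)⟩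

lemma exists_forall_betaCube_le_iff {p : (Fin n → ℝ) → ℝ → Prop} :
    (∃ r > (0 : ℝ), ∀ Q : BetaCube n fun _ ↦ 1, Q.l ≤ r → p (WithLp.ofLp Q.c) (Q.l / 2)) ↔
      ∀ᶠ r in 𝓝[>] 0, ∀ x, p x r := by
  rw [(nhdsGT_basis_Ioc (0 : ℝ)).eventually_iff]
  refine ⟨fun ⟨r, hr, h⟩ ↦ ⟨r / 2, half_pos hr, fun s hs x ↦ ?_⟩, fun ⟨r, hr, h⟩ ↦
    ⟨2 * r, by positivity, fun Q hQ ↦ h ⟨half_pos Q.l_pos, by linarith⟩ _⟩⟩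
  exact forall_betaCube_iff (p := fun x s ↦ s ≤ r / 2 → p x s).1
    (fun Q hQ ↦ h Q (by linarith)) x s hs.1 hs.2

lemma exists_forall_le_betaCube_iff {p : (Fin n → ℝ) → ℝ → Prop} :
    (∃ r > (0 : ℝ), ∀ Q : BetaCube n fun _ ↦ 1, r ≤ Q.l → p (WithLp.ofLp Q.c) (Q.l / 2)) ↔
      ∀ᶠ r in atTop, ∀ x, p x r := by
  rw [(atTop_basis_Ioi' 0).eventually_iff]
  refine ⟨fun ⟨r, hr, h⟩ ↦ ⟨r / 2, half_pos hr, fun s hs x ↦ ?_⟩, fun ⟨r, hr, h⟩ ↦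
    ⟨2 * r + 1, by positivity, fun Q hQ ↦ h (mem_Ioi.2 (by linarith)) _⟩⟩
  rw [mem_Ioi] at hs
  exact forall_betaCube_iff (p := fun x s ↦ r / 2 ≤ s → p x s).1
    (fun Q hQ ↦ h Q (by linarith)) x s (by linarith) hs.le

lemma exists_forall_le_norm_translate_iff {c : EuclideanSpace ℝ (Fin n)}
    {p : (Fin n → ℝ) → Prop} :
    (∃ R : ℝ, ∀ x : EuclideanSpace ℝ (Fin n), R ≤ ‖x‖ → p (WithLp.ofLp (c + x))) ↔
      ∀ᶠ x in Bornology.cobounded (Fin n → ℝ), p x := by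
  let e : EuclideanSpace ℝ (Fin n) ≃ₜ (Fin n → ℝ) :=
    (Homeomorph.addLeft c).trans (PiLp.homeomorph 2 fun _ ↦ ℝ)
  have he : map e (Bornology.cobounded _) = Bornology.cobounded (Fin n → ℝ) := by
    rw [cobounded_eq_cocompact, cobounded_eq_cocompact, ← e.comap_cocompact,
      map_comap_of_surjective e.surjective]
  rw [← he, eventually_map, hasBasis_cobounded_norm.eventually_iff]
  simp only [true_and, mem_ofPred_eq]
  rfl

lemma forall_small_osc_le_iff (hn : n ≠ 0) {α : ℝ} {f : EuclideanSpace ℝ (Fin n) → ℂ} :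
    (∀ ε > (0 : ℝ), ∃ r > (0 : ℝ), ∀ Q : BetaCube n fun _ ↦ 1, Q.l ≤ r →
      osc (fun _ ↦ 1) α f Q ≤ ε) ↔
      ∀ ε > (0 : ℝ), ∀ᶠ r in 𝓝[>] 0, ∀ x,
        meanOsc volume (f ∘ WithLp.toLp 2) x r ≤ ε * r ^ α := by
  refine .trans ?_ (forall_pos_mul_iff (Real.rpow_pos_of_pos two_pos α))
  simp only [osc_one_le_iff hn]
  exact forall₂_congr fun ε _ ↦ exists_forall_betaCube_le_iff
    (p := fun x r ↦ meanOsc volume (f ∘ WithLp.toLp 2) x r ≤ 2 ^ α * ε * r ^ α)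

lemma forall_large_osc_le_iff (hn : n ≠ 0) {α : ℝ} {f : EuclideanSpace ℝ (Fin n) → ℂ} :
    (∀ ε > (0 : ℝ), ∃ r > (0 : ℝ), ∀ Q : BetaCube n fun _ ↦ 1, r ≤ Q.l →
      osc (fun _ ↦ 1) α f Q ≤ ε) ↔
      ∀ ε > (0 : ℝ), ∀ᶠ r in atTop, ∀ x,
        meanOsc volume (f ∘ WithLp.toLp 2) x r ≤ ε * r ^ α := by
  refine .trans ?_ (forall_pos_mul_iff (Real.rpow_pos_of_pos two_pos α))
  simp only [osc_one_le_iff hn]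
  exact forall₂_congr fun ε _ ↦ exists_forall_le_betaCube_iff
    (p := fun x r ↦ meanOsc volume (f ∘ WithLp.toLp 2) x r ≤ 2 ^ α * ε * r ^ α)

lemma forall_far_osc_le_iff (hn : n ≠ 0) {α : ℝ} {f : EuclideanSpace ℝ (Fin n) → ℂ} :
    (∀ Q : BetaCube n fun _ ↦ 1, ∀ ε > (0 : ℝ), ∃ R : ℝ, ∀ x : EuclideanSpace ℝ (Fin n),
      R ≤ ‖x‖ → osc (fun _ ↦ 1) α f (Q.translate x) ≤ ε) ↔
      ∀ r > (0 : ℝ), ∀ ε > (0 : ℝ), ∀ᶠ x in Bornology.cobounded (Fin n → ℝ),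
        meanOsc volume (f ∘ WithLp.toLp 2) x r ≤ ε * r ^ α := by
  refine .trans ?_ (forall₂_congr fun r _ ↦
    forall_pos_mul_iff (Real.rpow_pos_of_pos two_pos α))
  simp only [osc_one_le_iff hn]
  refine .trans (forall₃_congr fun Q ε _ ↦ exists_forall_le_norm_translate_iff (p := fun x ↦
    meanOsc volume (f ∘ WithLp.toLp 2) x (Q.l / 2) ≤ 2 ^ α * ε * (Q.l / 2) ^ α)) ?_
  refine (forall_betaCube_iff (p := fun _ r ↦ ∀ ε > 0, ∀ᶠ x in Bornology.cobounded (Fin n → ℝ),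
    meanOsc volume (f ∘ WithLp.toLp 2) x r ≤ 2 ^ α * ε * r ^ α)).trans ?_
  exact forall_const _

lemma memVMO_one_iff (hn : n ≠ 0) {α : ℝ} {f : EuclideanSpace ℝ (Fin n) → ℂ} :
    MemVMO (fun _ ↦ 1) α f ↔
      (∃ M, ∀ Q : BetaCube n fun _ ↦ 1, osc (fun _ ↦ 1) α f Q ≤ M) ∧
        HasVanishingMeanOsc volume α (f ∘ WithLp.toLp 2) := by
  rw [MemVMO, forall_small_osc_le_iff hn, forall_large_osc_le_iff hn, forall_far_osc_le_iff hn,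
    ← locallyIntegrable_comp_toLp_iff]
  exact ⟨fun ⟨hf, hM, hsmall, hlarge, hfar⟩ ↦ ⟨hM, hf, hsmall, hlarge, hfar⟩,
    fun ⟨hM, hf, hsmall, hlarge, hfar⟩ ↦ ⟨hf, hM, hsmall, hlarge, hfar⟩⟩

lemma forall_exists_osc_sub_le_iff (hn : n ≠ 0) {α : ℝ} {f : EuclideanSpace ℝ (Fin n) → ℂ} :
    (∀ ε > (0 : ℝ), ∃ g : EuclideanSpace ℝ (Fin n) → ℂ,
      ContDiff ℝ (⊤ : ℕ∞) g ∧ HasCompactSupport g ∧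
        ∀ Q : BetaCube n fun _ ↦ 1, osc (fun _ ↦ 1) α (f - g) Q ≤ ε) ↔
      ∀ ε > (0 : ℝ), ∃ g : (Fin n → ℝ) → ℂ,
        ContDiff ℝ (⊤ : ℕ∞) g ∧ HasCompactSupport g ∧
          ∀ x r, 0 < r → meanOsc volume (f ∘ WithLp.toLp 2 - g) x r ≤ ε * r ^ α := by
  refine .trans ?_ (forall_pos_mul_iff (Real.rpow_pos_of_pos two_pos α))
  let L := PiLp.continuousLinearEquiv 2 ℝ fun _ : Fin n ↦ ℝ
  have hosc (ε : ℝ) (g : EuclideanSpace ℝ (Fin n) → ℂ) :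
      (∀ Q : BetaCube n fun _ ↦ 1, osc (fun _ ↦ 1) α (f - g) Q ≤ ε) ↔
        ∀ x r, 0 < r → meanOsc volume (f ∘ WithLp.toLp 2 - g ∘ WithLp.toLp 2) x r ≤
          2 ^ α * ε * r ^ α := by
    simp only [osc_one_le_iff hn]
    exact forall_betaCube_iff (p := fun x r ↦ meanOsc volume ((f - g) ∘ WithLp.toLp 2) x r ≤
      2 ^ α * ε * r ^ α)
  refine forall₂_congr fun ε _ ↦ ⟨fun ⟨g, hg, hgc, hfg⟩ ↦ ?_, fun ⟨g, hg, hgc, hfg⟩ ↦ ?_⟩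
  · exact ⟨g ∘ L.symm, hg.comp L.symm.contDiff, hgc.comp_homeomorph L.symm.toHomeomorph,
      (hosc ε g).1 hfg⟩
  · exact ⟨g ∘ L, hg.comp L.contDiff, hgc.comp_homeomorph L.toHomeomorph, (hosc ε _).2 hfg⟩

end Cubes

end VMOApprox

open VMOApprox in
theorem memVMO_iff_approx_smooth_compactly_supported_general {V E : Type*}
    [NormedAddCommGroup V] [NormedSpace ℝ V] [FiniteDimensional ℝ V] [MeasurableSpace V]
    [BorelSpace V] {μ : Measure V} [μ.IsAddHaarMeasure] [NormedAddCommGroup E] [NormedSpace ℝ E]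
    [CompleteSpace E] {α : ℝ} (hα0 : 0 < α) (hα1 : α < 1) {f : V → E}
    (hf : LocallyIntegrable f μ) :
    HasVanishingMeanOsc μ α f ↔ ∀ ε > (0 : ℝ), ∃ g : V → E,
      ContDiff ℝ (⊤ : ℕ∞) g ∧ HasCompactSupport g ∧
        ∀ x r, 0 < r → meanOsc μ (f - g) x r ≤ ε * r ^ α := by
  refine ⟨fun h ε hε ↦ h.exists_contDiff_hasCompactSupport_meanOsc_le hα0 hα1.le hε, fun h ↦ ?_⟩
  refine hasVanishingMeanOsc_of_forall_exists_meanOsc_sub_le hf fun ε hε ↦ ?_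
  obtain ⟨g, hg, hgc, hfg⟩ := h ε hε
  obtain ⟨K, hK⟩ := hg.lipschitzWith_of_hasCompactSupport hgc (by simp)
  exact ⟨g, hasVanishingMeanOsc_of_lipschitzWith hα0 hα1 hK hgc, hfg⟩

/-- **`CMO^{1,α} = VMO^{1,α}` for `0 < α < 1` (Guo–He–Wu–Yang).** For `β = (1,…,1)`
(ordinary cubes) and `0 < α < 1`, a locally integrable `f` with finite `BMO^{1,α}`
seminorm belongs to `VMO^{1,α}(ℝⁿ)` if and only if it can be approximated in the
`BMO^{1,α}` seminorm by smooth compactly supported functions. -/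
theorem memVMO_iff_approx_smooth_compactly_supported
    (n : ℕ) (hn : 1 ≤ n) (α : ℝ) (hα0 : 0 < α) (hα1 : α < 1)
    (f : EuclideanSpace ℝ (Fin n) → ℂ) (hf : LocallyIntegrable f volume)
    (hfin : ∃ M : ℝ, ∀ Q : BetaCube n (fun _ => 1), osc (fun _ => 1) α f Q ≤ M) :
    MemVMO (fun _ => (1:ℝ)) α f ↔
      ∀ ε > (0:ℝ), ∃ g : EuclideanSpace ℝ (Fin n) → ℂ,
        ContDiff ℝ (⊤ : ℕ∞) g ∧ HasCompactSupport g ∧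
        ∀ Q : BetaCube n (fun _ => 1), osc (fun _ => 1) α (f - g) Q ≤ ε :=
  ((VMOApprox.memVMO_one_iff (by lia)).trans (and_iff_right hfin)).trans <|
    (memVMO_iff_approx_smooth_compactly_supported_general hα0 hα1
      (VMOApprox.locallyIntegrable_comp_toLp_iff.2 hf)).trans
        (VMOApprox.forall_exists_osc_sub_le_iff (by lia)).symm

end
end
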